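/- Let G = (1/2) ξ·∇_xφ u − ∇_xφ·∇_ξ u + Γ(u,u), where φ is the Poisson potential of u. Let −3 ≤ γ < −2, N ≥ 4, ℓ₀ > 3/2, and ℓ − 1 ≥ max{N, ℓ₀/2 − 1/(γ+2)}. Then there is C > 0 such that for all t ≥ 0 and all sufficiently smooth rapidly decaying u: ‖⟨ξ⟩^{−(γ+2)ℓ₀/2} G(t)‖_{Z₁} + Σ_{|α|≤1} ‖⟨ξ⟩^{−(γ+2)ℓ₀/2} ∂^α_x G(t)‖ ≤ C |||u(t)|||²_{N,ℓ−1}. -/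

import Mathlib

open MeasureTheory Real

noncomputable section VPL

/-- The velocity/space domain `ℝ³`. -/
abbrev E3 : Type := EuclideanSpace ℝ (Fin 3)

/-- Japanese bracket `⟨ξ⟩ = (1+|ξ|²)^{1/2}`. -/
def jap (ξ : E3) : ℝ := Real.sqrt (1 + ‖ξ‖ ^ 2)

/-- Normalized global Maxwellian `M(ξ) = (2π)^{-3/2} e^{-|ξ|²/2}`. -/
def Mx (ξ : E3) : ℝ := (2 * π) ^ (-(3 : ℝ) / 2) * Real.exp (-‖ξ‖ ^ 2 / 2)

/-- `M^{1/2}`. -/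
def sqrtM (ξ : E3) : ℝ := Real.sqrt (Mx ξ)

/-- Partial derivative in the `i`-th coordinate. -/
def pd (i : Fin 3) (f : E3 → ℝ) (ξ : E3) : ℝ :=
  fderiv ℝ f ξ (EuclideanSpace.single i 1)

/-- The Landau collision kernel `B^{ij}(ξ) = (δ_{ij} - ξ_iξ_j/|ξ|²)|ξ|^{γ+2}`. -/
def Bij (γ : ℝ) (i j : Fin 3) (ξ : E3) : ℝ :=
  ((if i = j then (1 : ℝ) else 0) - ξ i * ξ j / ‖ξ‖ ^ 2) * ‖ξ‖ ^ (γ + 2)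

/-- The Landau collision operator `Q(f,g)`. -/
def Qop (γ : ℝ) (f g : E3 → ℝ) (ξ : E3) : ℝ :=
  ∑ i : Fin 3, ∑ j : Fin 3,
    pd i (fun ζ => ∫ ξ', Bij γ i j (ζ - ξ') * (f ξ' * pd j g ζ - pd j f ξ' * g ζ)) ξ

/-- The linearized Landau operator `L`. -/
def Lop (γ : ℝ) (u : E3 → ℝ) (ξ : E3) : ℝ :=
  -((Mx ξ) ^ (-(1 : ℝ) / 2)) *
    (Qop γ Mx (fun ζ => sqrtM ζ * u ζ) ξ + Qop γ (fun ζ => sqrtM ζ * u ζ) Mx ξ)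

/-- The nonlinear term `Γ(u₁,u₂)`. -/
def Gam (γ : ℝ) (u₁ u₂ : E3 → ℝ) (ξ : E3) : ℝ :=
  (Mx ξ) ^ (-(1 : ℝ) / 2) *
    Qop γ (fun ζ => sqrtM ζ * u₁ ζ) (fun ζ => sqrtM ζ * u₂ ζ) ξ

/-- The Landau collision frequency `σ^{ij} = B^{ij} ∗ M`. -/
def sigmaij (γ : ℝ) (i j : Fin 3) (ξ : E3) : ℝ := ∫ ξ', Bij γ i j (ξ - ξ') * Mx ξ'

/-- The time–velocity weight `w_{τ,λ}(t,ξ) = ⟨ξ⟩^{(γ+2)τ} exp(λ⟨ξ⟩²/(1+t)^ϑ)`. -/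
def wt (γ τ lam ϑ t : ℝ) (ξ : E3) : ℝ :=
  jap ξ ^ ((γ + 2) * τ) * Real.exp (lam * jap ξ ^ 2 / (1 + t) ^ ϑ)

/-- Weighted `L²_ξ` norm squared `|u|²_{τ,λ}`. -/
def vnormSq (γ τ lam ϑ t : ℝ) (u : E3 → ℝ) : ℝ :=
  ∫ ξ, (wt γ τ lam ϑ t ξ) ^ 2 * (u ξ) ^ 2

/-- Weighted dissipation norm squared `|u|²_{σ,τ,λ}`. -/
def vsigSq (γ τ lam ϑ t : ℝ) (u : E3 → ℝ) : ℝ :=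
  ∑ i : Fin 3, ∑ j : Fin 3, ∫ ξ,
    (wt γ τ lam ϑ t ξ) ^ 2 *
      (sigmaij γ i j ξ * pd i u ξ * pd j u ξ +
        sigmaij γ i j ξ * (ξ i / 2) * (ξ j / 2) * (u ξ) ^ 2)

/-- `L²_ξ` inner product. -/
def ipv (u v : E3 → ℝ) : ℝ := ∫ ξ, u ξ * v ξ

/-- Macroscopic coefficient `a`. -/
def aC (u : E3 → ℝ) : ℝ := ∫ ξ, sqrtM ξ * u ξ

/-- Macroscopic coefficient `b_i`. -/
def bC (i : Fin 3) (u : E3 → ℝ) : ℝ := ∫ ξ, ξ i * sqrtM ξ * u ξ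

/-- Macroscopic coefficient `c`. -/
def cC (u : E3 → ℝ) : ℝ := (1 / 6) * ∫ ξ, (‖ξ‖ ^ 2 - 3) * sqrtM ξ * u ξ

/-- Macroscopic projection `Pu`. -/
def Pv (u : E3 → ℝ) (ξ : E3) : ℝ :=
  (aC u + (∑ i : Fin 3, bC i u * ξ i) + cC u * (‖ξ‖ ^ 2 - 3)) * sqrtM ξ

/-- Microscopic part `{I - P}u`. -/
def IPv (u : E3 → ℝ) (ξ : E3) : ℝ := u ξ - Pv u ξ

/-- Multi-indices on `ℝ³` as triples of naturals. -/
abbrev MIdx : Type := ℕ × ℕ × ℕ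

/-- Length `|β|` of a multi-index. -/
def deg (β : MIdx) : ℕ := β.1 + β.2.1 + β.2.2

/-- Iterated partial derivative `∂^β`. -/
def pdM (β : MIdx) (f : E3 → ℝ) : E3 → ℝ :=
  (pd 0)^[β.1] ((pd 1)^[β.2.1] ((pd 2)^[β.2.2] f))

/-- The finite set of multi-indices of length at most `N`. -/
def midx (N : ℕ) : Finset MIdx :=
  ((Finset.range (N + 1)) ×ˢ (Finset.range (N + 1)) ×ˢ (Finset.range (N + 1))).filter
    fun β => deg β ≤ N

/-- Pairs `(α,β)` of multi-indices with `|α|+|β| ≤ N`. -/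
def midxP (N : ℕ) : Finset (MIdx × MIdx) :=
  ((midx N) ×ˢ (midx N)).filter fun p => deg p.1 + deg p.2 ≤ N

/-- Partial derivative in the space variable of `u = u(x,ξ)`. -/
def pdx (i : Fin 3) (u : E3 → E3 → ℝ) : E3 → E3 → ℝ :=
  fun x ξ => fderiv ℝ (fun y => u y ξ) x (EuclideanSpace.single i 1)

/-- Iterated space derivative `∂^α_x` of `u = u(x,ξ)`. -/
def pdxM (α : MIdx) (u : E3 → E3 → ℝ) : E3 → E3 → ℝ :=
  (pdx 0)^[α.1] ((pdx 1)^[α.2.1] ((pdx 2)^[α.2.2] u))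

/-- Mixed derivative `∂^α_β = ∂^α_x ∂^β_ξ` of `u = u(x,ξ)`. -/
def pdab (α β : MIdx) (u : E3 → E3 → ℝ) : E3 → E3 → ℝ :=
  fun x => pdM β (pdxM α u x)

/-- Weighted `L²_{x,ξ}` norm squared `‖u‖²_{τ,λ}`. -/
def xnormSq (γ τ lam ϑ t : ℝ) (u : E3 → E3 → ℝ) : ℝ := ∫ x, vnormSq γ τ lam ϑ t (u x)

/-- Weighted dissipation norm squared `‖u‖²_{σ,τ,λ}`. -/
def xsigSq (γ τ lam ϑ t : ℝ) (u : E3 → E3 → ℝ) : ℝ := ∫ x, vsigSq γ τ lam ϑ t (u x)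

/-- `L²_{x,ξ}` inner product. -/
def ipx (u v : E3 → E3 → ℝ) : ℝ := ∫ x, ∫ ξ, u x ξ * v x ξ

/-- `a(x)`. -/
def aF (u : E3 → E3 → ℝ) (x : E3) : ℝ := aC (u x)

/-- `b_i(x)`. -/
def bF (i : Fin 3) (u : E3 → E3 → ℝ) (x : E3) : ℝ := bC i (u x)

/-- `c(x)`. -/
def cF (u : E3 → E3 → ℝ) (x : E3) : ℝ := cC (u x)

/-- `{I-P}u` for `u = u(x,ξ)`. -/
def IPx (u : E3 → E3 → ℝ) : E3 → E3 → ℝ := fun x => IPv (u x)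

/-- The Poisson potential `φ = -(4π|x|)^{-1} ∗ ρ`. -/
def poisson (ρ : E3 → ℝ) (x : E3) : ℝ := -∫ y, ρ y / (4 * π * ‖x - y‖)

/-- The self-consistent potential of `u`. -/
def phiF (u : E3 → E3 → ℝ) : E3 → ℝ := poisson (aF u)

/-- `L²_x` norm squared. -/
def L2Sq (f : E3 → ℝ) : ℝ := ∫ x, (f x) ^ 2

/-- `H^N_x` norm squared. -/
def HsobSq (N : ℕ) (f : E3 → ℝ) : ℝ := ∑ α ∈ midx N, L2Sq (pdM α f)

/-- `‖∇_x f‖²_{H^N}`. -/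
def gradSobSq (N : ℕ) (f : E3 → ℝ) : ℝ := ∑ i : Fin 3, HsobSq N (pd i f)

/-- `‖∇_x (a,b,c)‖²_{H^N}`. -/
def abcGradSobSq (N : ℕ) (u : E3 → E3 → ℝ) : ℝ :=
  gradSobSq N (aF u) + (∑ i : Fin 3, gradSobSq N (bF i u)) + gradSobSq N (cF u)

/-- `‖∇²_x f‖²_{H^N}`. -/
def hessSobSq (N : ℕ) (f : E3 → ℝ) : ℝ :=
  ∑ i : Fin 3, ∑ j : Fin 3, HsobSq N (pd i (pd j f))

/-- Full instant energy norm `|||u(t)|||²_{N,ℓ,λ}`. -/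
def triSq (γ : ℝ) (N : ℕ) (ℓ lam ϑ t : ℝ) (u : E3 → E3 → ℝ) : ℝ :=
  (∑ p ∈ midxP N, xnormSq γ ((deg p.2 : ℝ) - ℓ) lam ϑ t (pdab p.1 p.2 u))
    + gradSobSq N (phiF u)

/-- `Z₁ = L²_ξ(L¹_x)` norm. -/
def Z1 (u : E3 → E3 → ℝ) : ℝ := Real.sqrt (∫ ξ, (∫ x, |u x ξ|) ^ 2)

/-- Un-currying of a Schwartz function on `ℝ³_x × ℝ³_ξ`. -/
def uc (u : SchwartzMap (E3 × E3) ℝ) : E3 → E3 → ℝ := fun x ξ => u (x, ξ)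

end VPL

noncomputable section

/-- The nonlinear source term `G = ½ ξ·∇_xφ u − ∇_xφ·∇_ξ u + Γ(u,u)`. -/
def Gfun (γ : ℝ) (u : E3 → E3 → ℝ) : E3 → E3 → ℝ := fun x ξ =>
  (1 / 2) * (∑ i : Fin 3, ξ i * pd i (phiF u) x) * u x ξ
    - (∑ i : Fin 3, pd i (phiF u) x * pd i (u x) ξ)
    + Gam γ (u x) (u x) ξ

/-! Every term of `G` is a product of a nonlocal factor and a derivative of `u`. The nonlocal factor
is `∇φ`, or a velocity convolution of the kernel `B` with a derivative of `u` times `M^{1/2}` or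
`ξ M^{1/2}`; Schwarz in the integration variable bounds the latter by `⟨ξ⟩^{γ+2}` times an `L²_ξ`
norm, `|B|²` being locally integrable for `γ > -7/2`. So `G` is bounded pointwise by products
`a(x) |g(x,ξ)|`. Cauchy–Schwarz in `x` gives the `Z₁` bound. For the `L²` bounds, the factor with
fewer derivatives is put in `L^∞_x` by a Sobolev inequality that costs three space derivatives.

The condition `ℓ - 1 ≥ ℓ₀/2 - 1/(γ+2)` says that the energy weight beats `⟨ξ⟩^{-(γ+2)ℓ₀/2}` by one
power of `⟨ξ⟩`. This power absorbs the factor `ξ` in `ξ·∇φ` and, as `γ ≥ -3`, the weight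
`⟨ξ⟩^{-(γ+2)}` that the energy gives up for one velocity derivative; where `Γ(u,u)` has two of them,
the decay `⟨ξ⟩^{γ+2}` of the convolution pays for the second. -/

open Metric Module
open scoped LineDeriv SchwartzMap ContDiff ENNReal NNReal

/-! ### Singular kernels against decaying functions -/

section Decay

lemma one_add_norm_le_mul_one_add_norm_sub {E : Type*} [SeminormedAddCommGroup E] (x y : E) :
    1 + ‖y‖ ≤ (1 + ‖x‖) * (1 + ‖x - y‖) := by
  have := norm_le_norm_add_norm_sub x y
  nlinarith [norm_nonneg x, norm_nonneg (x - y)]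

lemma one_add_norm_sub_rpow_neg_le {E : Type*} [SeminormedAddCommGroup E] {r : ℝ} (hr : 0 ≤ r)
    (x y : E) : (1 + ‖x - y‖) ^ (-r) ≤ (1 + ‖x‖) ^ r * (1 + ‖y‖) ^ (-r) := by
  rw [rpow_neg (by positivity), rpow_neg (by positivity), ← div_eq_mul_inv, inv_le_comm₀
    (by positivity) (by positivity), inv_div, div_le_iff₀ (by positivity), mul_comm,
    ← mul_rpow (by positivity) (by positivity)]
  exact rpow_le_rpow (by positivity) (one_add_norm_le_mul_one_add_norm_sub x y) hr

lemma schwartzMap_norm_le_one_add_norm_rpow_neg {E F : Type*} [NormedAddCommGroup E]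
    [NormedSpace ℝ E] [NormedAddCommGroup F] [NormedSpace ℝ F] (f : 𝓢(E, F)) (r : ℝ) :
    ∃ C, 0 ≤ C ∧ ∀ x, ‖f x‖ ≤ C * (1 + ‖x‖) ^ (-r) := by
  obtain ⟨n, hn⟩ := exists_nat_ge r
  refine ⟨2 ^ n * ((Finset.Iic (n, 0)).sup fun m => SchwartzMap.seminorm ℝ m.1 m.2) f,
    by positivity, fun x => ?_⟩
  have h := SchwartzMap.one_add_le_sup_seminorm_apply (𝕜 := ℝ) (m := (n, 0)) le_rfl le_rfl f x
  rw [norm_iteratedFDeriv_zero] at h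
  rw [rpow_neg (by positivity), ← div_eq_mul_inv, le_div_iff₀ (by positivity), mul_comm]
  refine le_trans ?_ h
  gcongr
  rw [← rpow_natCast]
  exact rpow_le_rpow_of_exponent_le (by simp) hn

lemma norm_rpow_neg_mul_one_add_norm_rpow_le {E : Type*} [SeminormedAddCommGroup E] {a : ℝ}
    (ha : 0 ≤ a) (x : E) :
    ‖x‖ ^ (-a) * (1 + ‖x‖) ^ a ≤ 2 ^ a * (1 + ‖x‖ ^ (-a)) := by
  rcases le_total ‖x‖ 1 with h | h
  · calc ‖x‖ ^ (-a) * (1 + ‖x‖) ^ a ≤ ‖x‖ ^ (-a) * 2 ^ a := by gcongr; linarith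
      _ ≤ 2 ^ a * (1 + ‖x‖ ^ (-a)) := by
          rw [mul_add, mul_comm]
          exact le_add_of_nonneg_left (by positivity)
  · have hx : 0 < ‖x‖ := by positivity
    calc ‖x‖ ^ (-a) * (1 + ‖x‖) ^ a ≤ ‖x‖ ^ (-a) * (2 * ‖x‖) ^ a := by gcongr; linarith
      _ = 2 ^ a := by
          rw [mul_rpow zero_le_two hx.le, mul_left_comm, ← rpow_add hx]; simp
      _ ≤ 2 ^ a * (1 + ‖x‖ ^ (-a)) := by
          rw [mul_add, mul_one]
          exact le_add_of_nonneg_right (by positivity)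

lemma norm_rpow_neg_le_one_add_indicator {E : Type*} [SeminormedAddCommGroup E] {a : ℝ}
    (ha : 0 ≤ a) (x : E) :
    ‖x‖ ^ (-a) ≤ 1 + (ball 0 1).indicator (fun y : E => ‖y‖ ^ (-a)) x := by
  by_cases h : x ∈ ball (0 : E) 1
  · simp [Set.indicator_of_mem h]
  · rw [Set.indicator_of_notMem h, add_zero]
    exact rpow_le_one_of_one_le_of_nonpos (by simpa using h) (neg_nonpos.2 ha)

/-- By Peetre's inequality `(1 + ‖x‖) ^ a` is absorbed into the two factors on the left; what is
left of the singularity lives in the unit ball. -/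
lemma norm_rpow_neg_mul_one_add_norm_sub_rpow_neg_le {E : Type*} [SeminormedAddCommGroup E]
    {a r : ℝ} (ha : 0 ≤ a) (har : a ≤ r) (x y : E) :
    ‖y‖ ^ (-a) * (1 + ‖x - y‖) ^ (-r) ≤ (1 + ‖x‖) ^ (-a) * (2 ^ a *
      (2 * (1 + ‖x - y‖) ^ (-(r - a)) + (ball 0 1).indicator (fun z : E => ‖z‖ ^ (-a)) y)) := by
  set S : ℝ := (ball 0 1).indicator (fun z : E => ‖z‖ ^ (-a)) y
  set T : ℝ := (1 + ‖x - y‖) ^ (-(r - a))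
  have hS : 0 ≤ S := Set.indicator_nonneg (fun _ _ => by positivity) y
  have hT : 0 ≤ T := by positivity
  have hT1 : T ≤ 1 := rpow_le_one_of_one_le_of_nonpos (by simp) (by linarith)
  have peetre : (1 + ‖x‖) ^ a * (1 + ‖x - y‖) ^ (-r) ≤ (1 + ‖y‖) ^ a * T := by
    have h := one_add_norm_le_mul_one_add_norm_sub y x
    rw [norm_sub_rev] at h
    calc (1 + ‖x‖) ^ a * (1 + ‖x - y‖) ^ (-r)
        ≤ ((1 + ‖y‖) * (1 + ‖x - y‖)) ^ a * (1 + ‖x - y‖) ^ (-r) := by gcongr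
      _ = (1 + ‖y‖) ^ a * T := by
          rw [mul_rpow (by positivity) (by positivity), mul_assoc, ← rpow_add (by positivity)]
          congr 2; ring
  have split : (1 + ‖y‖ ^ (-a)) * T ≤ 2 * T + S := by
    have := norm_rpow_neg_le_one_add_indicator ha y
    nlinarith
  rw [rpow_neg (by positivity : (0 : ℝ) ≤ 1 + ‖x‖), inv_mul_eq_div, le_div_iff₀ (by positivity)]
  calc ‖y‖ ^ (-a) * (1 + ‖x - y‖) ^ (-r) * (1 + ‖x‖) ^ a
      = ‖y‖ ^ (-a) * ((1 + ‖x‖) ^ a * (1 + ‖x - y‖) ^ (-r)) := by ring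
    _ ≤ ‖y‖ ^ (-a) * ((1 + ‖y‖) ^ a * T) := by gcongr
    _ = ‖y‖ ^ (-a) * (1 + ‖y‖) ^ a * T := by ring
    _ ≤ 2 ^ a * (1 + ‖y‖ ^ (-a)) * T :=
        mul_le_mul_of_nonneg_right (norm_rpow_neg_mul_one_add_norm_rpow_le ha y) hT
    _ ≤ 2 ^ a * (2 * T + S) := by rw [mul_assoc]; gcongr

variable {E : Type*} [NormedAddCommGroup E] [NormedSpace ℝ E] [FiniteDimensional ℝ E]
  [MeasurableSpace E] [BorelSpace E] (μ : Measure E) [μ.IsAddHaarMeasure]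

lemma integrable_indicator_ball_norm_rpow_neg {a : ℝ} (ha : 0 ≤ a) (had : a < finrank ℝ E) :
    Integrable ((ball 0 1).indicator fun x : E => ‖x‖ ^ (-a)) μ := by
  have hd : 0 < finrank ℝ E := by exact_mod_cast ha.trans_lt had
  refine (integrableOn_ball_of_norm_le_rpow hd had (C := 1) (.of_forall fun x => ?_)
    (Measurable.aestronglyMeasurable (by fun_prop))).integrable_indicator measurableSet_ball
  rw [norm_of_nonneg (by positivity), one_mul]

lemma exists_integral_norm_rpow_neg_mul_le {a r : ℝ} (ha : 0 ≤ a) (had : a < finrank ℝ E)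
    (hr : a + finrank ℝ E < r) :
    ∃ C, 0 ≤ C ∧ ∀ x : E, Integrable (fun y => ‖y‖ ^ (-a) * (1 + ‖x - y‖) ^ (-r)) μ ∧
      ∫ y, ‖y‖ ^ (-a) * (1 + ‖x - y‖) ^ (-r) ∂μ ≤ C * (1 + ‖x‖) ^ (-a) := by
  set S : E → ℝ := (ball 0 1).indicator fun y => ‖y‖ ^ (-a)
  set T : E → ℝ := fun y => (1 + ‖y‖) ^ (-(r - a))
  have hS : Integrable S μ := integrable_indicator_ball_norm_rpow_neg μ ha had
  have hT : Integrable T μ := integrable_one_add_norm (by linarith)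
  have pointwise : ∀ x y : E, ‖y‖ ^ (-a) * (1 + ‖x - y‖) ^ (-r) ≤
      (1 + ‖x‖) ^ (-a) * (2 ^ a * (2 * T (x - y) + S y)) :=
    norm_rpow_neg_mul_one_add_norm_sub_rpow_neg_le ha (by linarith)
  have : 0 ≤ ∫ y, S y ∂μ :=
    integral_nonneg fun y => Set.indicator_nonneg (fun _ _ => by positivity) y
  have : 0 ≤ ∫ y, T y ∂μ := integral_nonneg fun y => by positivity
  refine ⟨2 ^ a * (2 * ∫ y, T y ∂μ + ∫ y, S y ∂μ), by positivity, fun x => ?_⟩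
  have hTx : Integrable (fun y => 2 * T (x - y)) μ := (hT.comp_sub_left x).const_mul 2
  have dominant := ((hTx.add hS).const_mul (2 ^ a)).const_mul ((1 + ‖x‖) ^ (-a))
  have hint : Integrable (fun y => ‖y‖ ^ (-a) * (1 + ‖x - y‖) ^ (-r)) μ :=
    dominant.mono' (Measurable.aestronglyMeasurable (by fun_prop))
      (.of_forall fun y => by rw [norm_of_nonneg (by positivity)]; exact pointwise x y)
  refine ⟨hint, (integral_mono hint dominant (pointwise x)).trans_eq ?_⟩
  simp only [Pi.add_apply]
  rw [integral_const_mul, integral_const_mul, integral_add hTx hS,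
    integral_const_mul, integral_sub_left_eq_self T μ x, mul_comm]

end Decay

/-! ### Convolution of a Schwartz function with a kernel carried by a subspace -/

section KernelConv

variable {W V F : Type*} [NormedAddCommGroup W] [NormedSpace ℝ W] [MeasureSpace W]
  [NormedAddCommGroup V] [NormedSpace ℝ V] [NormedAddCommGroup F] [NormedSpace ℝ F]

/-- The convolution `z ↦ ∫ κ(w) f(z - ι w) dw` of a function on `V` with the kernel `κ` carried by
the image of the linear map `ι`. The Landau operator uses `ι = (0, ·)`, the Poisson potential
`ι = id`. -/
def kernelConv (κ : W → ℝ) (ι : W →L[ℝ] V) (f : V → F) (z : V) : F :=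
  ∫ w, κ w • f (z - ι w)

/-- A kernel that can be convolved, along `ι`, with Schwartz functions. -/
structure IsTemperedKernel (κ : W → ℝ) (ι : W →L[ℝ] V) : Prop where
  aestronglyMeasurable : AEStronglyMeasurable κ
  exists_integrable : ∃ r : ℝ, 0 ≤ r ∧ Integrable fun w => κ w * (1 + ‖ι w‖) ^ (-r)

namespace IsTemperedKernel

variable {κ : W → ℝ} {ι : W →L[ℝ] V}

lemma exists_bound (hκ : IsTemperedKernel κ ι) (f : 𝓢(V, F)) :
    ∃ r : ℝ, 0 ≤ r ∧ ∃ b : W → ℝ, Integrable b ∧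
      ∀ z w, ‖κ w • f (z - ι w)‖ ≤ (1 + ‖z‖) ^ r * b w := by
  obtain ⟨r, hr, hint⟩ := hκ.exists_integrable
  obtain ⟨C, hC, hf⟩ := schwartzMap_norm_le_one_add_norm_rpow_neg f r
  refine ⟨r, hr, fun w => C * ‖κ w * (1 + ‖ι w‖) ^ (-r)‖, hint.norm.const_mul C, fun z w => ?_⟩
  dsimp only
  rw [norm_smul, norm_mul, norm_of_nonneg (by positivity : 0 ≤ (1 + ‖ι w‖) ^ (-r))]
  calc ‖κ w‖ * ‖f (z - ι w)‖
      ≤ ‖κ w‖ * (C * ((1 + ‖z‖) ^ r * (1 + ‖ι w‖) ^ (-r))) := by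
        gcongr
        exact (hf _).trans (by gcongr; exact one_add_norm_sub_rpow_neg_le hr z (ι w))
    _ = (1 + ‖z‖) ^ r * (C * (‖κ w‖ * (1 + ‖ι w‖) ^ (-r))) := by ring

variable [OpensMeasurableSpace W] [SecondCountableTopology W]

lemma integrable_smul (hκ : IsTemperedKernel κ ι) (f : 𝓢(V, F)) (z : V) :
    Integrable fun w => κ w • f (z - ι w) := by
  obtain ⟨r, -, b, hb, hle⟩ := hκ.exists_bound f
  refine (hb.const_mul ((1 + ‖z‖) ^ r)).mono' ?_ (.of_forall (hle z))
  exact hκ.aestronglyMeasurable.smul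
    (f.continuous.comp (by fun_prop : Continuous fun w => z - ι w)).aestronglyMeasurable

lemma kernelConv_sub (hκ : IsTemperedKernel κ ι) (f g : 𝓢(V, F)) (z : V) :
    kernelConv κ ι (f - g : 𝓢(V, F)) z = kernelConv κ ι f z - kernelConv κ ι g z := by
  simp only [kernelConv, sub_apply, smul_sub]
  exact integral_sub (hκ.integrable_smul f z) (hκ.integrable_smul g z)

lemma hasFDerivAt_kernelConv (hκ : IsTemperedKernel κ ι) (f : 𝓢(V, F)) (z : V) :
    HasFDerivAt (kernelConv κ ι f) (kernelConv κ ι (fderiv ℝ f) z) z := by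
  have hκ' := hκ.integrable_smul (SchwartzMap.fderivCLM ℝ V F f)
  obtain ⟨r, hr, b, hb, hle⟩ := hκ.exists_bound (SchwartzMap.fderivCLM ℝ V F f)
  have hb0 : ∀ w, 0 ≤ b w := fun w => by simpa using (norm_nonneg _).trans (hle 0 w)
  refine hasFDerivAt_integral_of_dominated_of_fderiv_le
    (F' := fun y w => κ w • fderiv ℝ f (y - ι w)) (ball_mem_nhds z one_pos)
    (.of_forall fun y => (hκ.integrable_smul f y).aestronglyMeasurable) (hκ.integrable_smul f z)
    (hκ' z).aestronglyMeasurable (.of_forall fun w y hy => ?_)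
    (hb.const_mul ((2 + ‖z‖) ^ r)) (.of_forall fun w y _ => ?_)
  · refine (hle y w).trans (mul_le_mul_of_nonneg_right ?_ (hb0 w))
    have h : ‖y - z‖ < 1 := by simpa [dist_eq_norm] using hy
    have := norm_le_norm_add_norm_sub' y z
    exact rpow_le_rpow (by positivity) (by linarith) hr
  · exact (((f.hasFDerivAt _).comp y ((hasFDerivAt_id y).sub_const (ι w))).const_smul (κ w))

lemma fderiv_kernelConv_apply (hκ : IsTemperedKernel κ ι) (f : 𝓢(V, F)) (z m : V) :
    fderiv ℝ (kernelConv κ ι f) z m = kernelConv κ ι (∂_{m} f : 𝓢(V, F)) z := by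
  have hint := hκ.integrable_smul (SchwartzMap.fderivCLM ℝ V F f) z
  simp only [SchwartzMap.fderivCLM_apply] at hint
  rw [(hκ.hasFDerivAt_kernelConv f z).fderiv, kernelConv,
    ContinuousLinearMap.integral_apply hint]
  simp only [kernelConv, smul_apply, SchwartzMap.lineDerivOp_apply_eq_fderiv]

lemma differentiable_kernelConv (hκ : IsTemperedKernel κ ι) (f : 𝓢(V, F)) :
    Differentiable ℝ (kernelConv κ ι f) :=
  fun z => (hκ.hasFDerivAt_kernelConv f z).differentiableAt

lemma contDiff_kernelConv [FiniteDimensional ℝ V] (hκ : IsTemperedKernel κ ι) (f : 𝓢(V, F))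
    (n : ℕ) : ContDiff ℝ n (kernelConv κ ι f) := by
  induction n generalizing f with
  | zero => exact contDiff_zero.2 (hκ.differentiable_kernelConv f).continuous
  | succ n ih =>
    push_cast
    refine contDiff_succ_iff_fderiv_apply.2 ⟨hκ.differentiable_kernelConv f, by simp, fun m => ?_⟩
    rw [funext fun z => hκ.fderiv_kernelConv_apply f z m]
    exact ih _

end IsTemperedKernel

end KernelConv

/-! ### A Sobolev inequality on `ℝ³` -/

section Sobolev

lemma enorm_sq_eq_ofReal_sq (a : ℝ) : ‖a‖ₑ ^ 2 = ENNReal.ofReal (a ^ 2) := by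
  rw [Real.enorm_eq_ofReal_abs, ← ENNReal.ofReal_pow (abs_nonneg a), sq_abs]

/-- `g ^ 2` is the integral over a half-line of its derivative `2 g g' ≤ g ^ 2 + g' ^ 2`. -/
lemma enorm_sq_le_lintegral_add_deriv {g : ℝ → ℝ} (hg : ContDiff ℝ 1 g) (a : ℝ) :
    ‖g a‖ₑ ^ 2 ≤ ∫⁻ t, (‖g t‖ₑ ^ 2 + ‖deriv g t‖ₑ ^ 2) := by
  have : Continuous (deriv g) := hg.continuous_deriv le_rfl
  have : Continuous g := hg.continuous
  simp_rw [enorm_sq_eq_ofReal_sq, ← ENNReal.ofReal_add (sq_nonneg _) (sq_nonneg _)]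
  by_cases hfin : ∫⁻ t, ENNReal.ofReal (g t ^ 2 + deriv g t ^ 2) = ⊤
  · exact hfin ▸ le_top
  have hI : Integrable fun t => g t ^ 2 + deriv g t ^ 2 :=
    (lintegral_ofReal_ne_top_iff_integrable (by fun_prop)
      (.of_forall fun t => by positivity)).1 hfin
  have hsq : Integrable fun t => g t ^ 2 := hI.mono' (by fun_prop)
    (.of_forall fun t => by rw [norm_of_nonneg (by positivity)]; nlinarith [sq_nonneg (deriv g t)])
  have hle : ∀ t, ‖2 * g t * deriv g t‖ ≤ g t ^ 2 + deriv g t ^ 2 := fun t => by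
    rw [norm_eq_abs, abs_le]
    constructor <;> nlinarith [sq_nonneg (g t + deriv g t), sq_nonneg (g t - deriv g t)]
  have hder : Integrable fun t => 2 * g t * deriv g t := hI.mono' (by fun_prop) (.of_forall hle)
  have hd : ∀ t ∈ Set.Iic a, HasDerivAt (fun t => g t ^ 2) (2 * g t * deriv g t) t := fun t _ => by
    simpa using (hg.differentiable one_ne_zero t).hasDerivAt.fun_pow 2
  have key := integral_Iic_of_hasDerivAt_of_tendsto' hd hder.integrableOn
    (tendsto_zero_of_hasDerivAt_of_integrableOn_Iic hd hder.integrableOn hsq.integrableOn)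
  rw [← ofReal_integral_eq_lintegral_ofReal hI (.of_forall fun t => by positivity)]
  refine ENNReal.ofReal_le_ofReal ?_
  calc g a ^ 2 = ∫ t in Set.Iic a, 2 * g t * deriv g t := by rw [key, sub_zero]
    _ ≤ ∫ t in Set.Iic a, (g t ^ 2 + deriv g t ^ 2) :=
        setIntegral_mono hder.integrableOn hI.integrableOn fun t => (le_abs_self _).trans (hle t)
    _ ≤ ∫ t, (g t ^ 2 + deriv g t ^ 2) :=
        setIntegral_le_integral hI (.of_forall fun t => by positivity)

/-- The `i`-th standard basis vector of `ℝ³`. -/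
abbrev basisVec (i : Fin 3) : E3 := EuclideanSpace.single i 1

lemma contDiff_pd {n : WithTop ℕ∞} {f : E3 → ℝ} (hf : ContDiff ℝ (n + 1) f) (i : Fin 3) :
    ContDiff ℝ n (pd i f) :=
  (hf.fderiv_right le_rfl).clm_apply contDiff_const

lemma contDiff_iterate_pd {m n k : ℕ} {f : E3 → ℝ} (i : Fin 3) (hm : n + k ≤ m)
    (hf : ContDiff ℝ m f) : ContDiff ℝ n ((pd i)^[k] f) := by
  replace hf : ContDiff ℝ (n + k : ℕ) f := hf.of_le (by exact_mod_cast hm)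
  clear hm
  induction k generalizing f with
  | zero => exact hf
  | succ k ih => exact ih (contDiff_pd (by exact_mod_cast hf) i)

lemma continuous_pdM {f : E3 → ℝ} {p : MIdx} (hf : ContDiff ℝ (deg p) f) :
    Continuous (pdM p f) := by
  have h2 : ContDiff ℝ (p.1 + p.2.1 : ℕ) ((pd 2)^[p.2.2] f) := contDiff_iterate_pd 2 le_rfl hf
  have h1 : ContDiff ℝ p.1 ((pd 1)^[p.2.1] ((pd 2)^[p.2.2] f)) := contDiff_iterate_pd 1 le_rfl h2
  exact (contDiff_iterate_pd (n := 0) 0 (zero_add _).le h1).continuous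

lemma enorm_sq_le_lintegral_line {f : E3 → ℝ} (hf : ContDiff ℝ 1 f) (i : Fin 3) (x : E3) :
    ‖f x‖ₑ ^ 2 ≤ ∫⁻ t : ℝ, ∑ k ∈ Finset.range 2, ‖(pd i)^[k] f (x + t • basisVec i)‖ₑ ^ 2 := by
  have hline : ∀ t : ℝ, HasDerivAt (fun t : ℝ => x + t • basisVec i) (basisVec i) t := fun t => by
    simpa using ((hasDerivAt_id t).smul_const (basisVec i)).const_add x
  have hder : ∀ t : ℝ, deriv (fun t => f (x + t • basisVec i)) t = pd i f (x + t • basisVec i) :=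
    fun t => (((hf.differentiable one_ne_zero _).hasFDerivAt).comp_hasDerivAt t (hline t)).deriv
  simpa [hder, Finset.sum_range_succ] using
    enorm_sq_le_lintegral_add_deriv (g := fun t => f (x + t • basisVec i)) (by fun_prop) 0

lemma lintegral_lintegral_lintegral_coordinates {F : E3 → ℝ≥0∞} (hF : Measurable F) (x : E3) :
    ∫⁻ r : ℝ, ∫⁻ s : ℝ, ∫⁻ t : ℝ, F (x + r • basisVec 2 + s • basisVec 1 + t • basisVec 0)
      = ∫⁻ y, F y := by
  rw [← lintegral_add_left_eq_self F x,
    ← (PiLp.volume_preserving_toLp (Fin 3)).lintegral_comp (by fun_prop),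
    ← ((volume_preserving_piFinSuccAbove (fun _ : Fin 3 => ℝ) 2).symm _).lintegral_comp
      (by fun_prop),
    Measure.volume_eq_prod, lintegral_prod _ (by fun_prop)]
  congr 1; ext r
  rw [← ((volume_preserving_finTwoArrow ℝ).symm _).lintegral_comp (by fun_prop),
    Measure.volume_eq_prod, lintegral_prod_symm' _ (by fun_prop)]
  refine lintegral_congr fun s => lintegral_congr fun t => congrArg F ?_
  rw [add_assoc, add_assoc]
  congr 1
  ext k
  fin_cases k <;> simp [MeasurableEquiv.piFinSuccAbove, MeasurableEquiv.finTwoArrow] <;> rfl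

lemma sum_lintegral_le {α ι : Type*} [MeasurableSpace α] {μ : Measure α} (s : Finset ι)
    (f : ι → α → ℝ≥0∞) : ∑ i ∈ s, ∫⁻ a, f i a ∂μ ≤ ∫⁻ a, ∑ i ∈ s, f i a ∂μ := by
  classical
  induction s using Finset.induction_on with
  | empty => simp
  | insert i s hi ih =>
    simp only [Finset.sum_insert hi]
    exact (add_le_add_right ih _).trans (le_lintegral_add _ _)

/-- The multi-indices with all entries at most `1`. -/
def cubeIdx : Finset MIdx := Finset.range 2 ×ˢ Finset.range 2 ×ˢ Finset.range 2

lemma sum_cubeIdx (F : MIdx → ℝ≥0∞) :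
    ∑ p ∈ cubeIdx, F p
      = ∑ c ∈ Finset.range 2, ∑ b ∈ Finset.range 2, ∑ a ∈ Finset.range 2, F (a, b, c) := by
  simp only [cubeIdx, Finset.sum_product, Finset.sum_range_succ, Finset.sum_range_zero]
  ring

lemma deg_le_three_of_mem_cubeIdx {p : MIdx} (hp : p ∈ cubeIdx) : deg p ≤ 3 := by
  simp only [cubeIdx, Finset.mem_product, Finset.mem_range] at hp
  rw [deg]; omega

lemma measurable_enorm_sq_pdM {f : E3 → ℝ} (hf : ContDiff ℝ 3 f) {p : MIdx} (hp : p ∈ cubeIdx) :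
    Measurable fun y => ‖pdM p f y‖ₑ ^ 2 :=
  (continuous_pdM (hf.of_le (by exact_mod_cast deg_le_three_of_mem_cubeIdx hp))
    ).measurable.enorm.pow_const 2

lemma enorm_sq_le_lintegral_iterated_line {f : E3 → ℝ} (hf : ContDiff ℝ 3 f) (x : E3) :
    ‖f x‖ₑ ^ 2 ≤ ∫⁻ r : ℝ, ∑ c ∈ Finset.range 2, ∫⁻ s : ℝ, ∑ b ∈ Finset.range 2, ∫⁻ t : ℝ,
      ∑ a ∈ Finset.range 2, ‖pdM (a, b, c) f
        (x + r • basisVec 2 + s • basisVec 1 + t • basisVec 0)‖ₑ ^ 2 := by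
  refine (enorm_sq_le_lintegral_line (hf.of_le (by norm_num)) 2 x).trans
    (lintegral_mono fun r => Finset.sum_le_sum fun c hc => ?_)
  have h2 : ContDiff ℝ (2 : ℕ) ((pd 2)^[c] f) :=
    contDiff_iterate_pd 2 (by have := Finset.mem_range.1 hc; omega) (m := 3) hf
  refine (enorm_sq_le_lintegral_line (h2.of_le (by norm_num)) 1 _).trans
    (lintegral_mono fun s => Finset.sum_le_sum fun b hb => ?_)
  have h1 : ContDiff ℝ (1 : ℕ) ((pd 1)^[b] ((pd 2)^[c] f)) :=
    contDiff_iterate_pd 1 (by have := Finset.mem_range.1 hb; omega) h2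
  exact enorm_sq_le_lintegral_line h1 0 _

/-- The Sobolev inequality obtained from the one-dimensional one in each coordinate. -/
lemma enorm_sq_le_sum_lintegral_pdM {f : E3 → ℝ} (hf : ContDiff ℝ 3 f) (x : E3) :
    ‖f x‖ₑ ^ 2 ≤ ∑ p ∈ cubeIdx, ∫⁻ y, ‖pdM p f y‖ₑ ^ 2 := by
  calc ‖f x‖ₑ ^ 2
      ≤ ∫⁻ r : ℝ, ∑ c ∈ Finset.range 2, ∫⁻ s : ℝ, ∑ b ∈ Finset.range 2, ∫⁻ t : ℝ,
          ∑ a ∈ Finset.range 2, ‖pdM (a, b, c) f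
            (x + r • basisVec 2 + s • basisVec 1 + t • basisVec 0)‖ₑ ^ 2 :=
        enorm_sq_le_lintegral_iterated_line hf x
    _ ≤ ∫⁻ r : ℝ, ∫⁻ s : ℝ, ∫⁻ t : ℝ, ∑ c ∈ Finset.range 2, ∑ b ∈ Finset.range 2,
          ∑ a ∈ Finset.range 2, ‖pdM (a, b, c) f
            (x + r • basisVec 2 + s • basisVec 1 + t • basisVec 0)‖ₑ ^ 2 := by
        refine lintegral_mono fun r => (sum_lintegral_le _ _).trans (lintegral_mono fun s => ?_)
        refine (Finset.sum_le_sum fun c _ => sum_lintegral_le _ _).trans (sum_lintegral_le _ _)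
    _ = ∫⁻ r : ℝ, ∫⁻ s : ℝ, ∫⁻ t : ℝ, ∑ p ∈ cubeIdx,
          ‖pdM p f (x + r • basisVec 2 + s • basisVec 1 + t • basisVec 0)‖ₑ ^ 2 := by
        simp only [sum_cubeIdx]
    _ = ∫⁻ y, ∑ p ∈ cubeIdx, ‖pdM p f y‖ₑ ^ 2 :=
        lintegral_lintegral_lintegral_coordinates
          (Finset.measurable_fun_sum _ fun _ hp => measurable_enorm_sq_pdM hf hp) x
    _ = ∑ p ∈ cubeIdx, ∫⁻ y, ‖pdM p f y‖ₑ ^ 2 :=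
        lintegral_finsetSum' _ fun _ hp => (measurable_enorm_sq_pdM hf hp).aemeasurable

end Sobolev

/-! ### Mixed Lebesgue norms -/

section MixedNorm

variable {α β : Type*} [MeasurableSpace α] [MeasurableSpace β]

lemma eLpNorm_two_sq {ε : Type*} [ENorm ε] (f : α → ε) (μ : Measure α) :
    eLpNorm f 2 μ ^ 2 = ∫⁻ x, ‖f x‖ₑ ^ 2 ∂μ := by
  simpa using eLpNorm_nnreal_pow_eq_lintegral (f := f) (μ := μ) (two_ne_zero : (2 : ℝ≥0) ≠ 0)

lemma ofReal_sqrt_integral_sq_le_eLpNorm (f : α → ℝ) (μ : Measure α) :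
    ENNReal.ofReal √(∫ x, f x ^ 2 ∂μ) ≤ eLpNorm f 2 μ := by
  have hnn : 0 ≤ ∫ x, f x ^ 2 ∂μ := integral_nonneg fun _ => sq_nonneg _
  rw [← ENNReal.pow_le_pow_left_iff two_ne_zero, eLpNorm_two_sq,
    ← ENNReal.ofReal_pow (sqrt_nonneg _), sq_sqrt hnn, ← Real.enorm_of_nonneg hnn]
  exact (enorm_integral_le_lintegral_enorm _).trans_eq (by simp only [enorm_pow])

variable {μ : Measure α} {ν : Measure β}

lemma measurable_eLpNorm_left [SFinite μ] {f : α → β → ℝ} (hf : Measurable (Function.uncurry f))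
    {p : ℝ≥0∞} (hp : p ≠ ⊤) : Measurable fun ξ => eLpNorm (fun x => f x ξ) p μ := by
  rcases eq_or_ne p 0 with rfl | hp0
  · simp
  · simp only [eLpNorm_eq_lintegral_rpow_enorm_toReal hp0 hp]
    exact (Measurable.lintegral_prod_left' (hf.enorm.pow_const _)).pow_const _

lemma lintegral_mul_le_eLpNorm_two {f g : α → ℝ≥0∞} (hf : AEMeasurable f μ)
    (hg : AEMeasurable g μ) : ∫⁻ x, f x * g x ∂μ ≤ eLpNorm f 2 μ * eLpNorm g 2 μ := by
  simpa [eLpNorm_eq_lintegral_rpow_enorm_toReal two_ne_zero ENNReal.ofNat_ne_top] using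
    ENNReal.lintegral_mul_le_Lp_mul_Lq μ .two_two hf hg

variable (μ ν) in
/-- The norm of `L²_ξ(L^p_x)`, where `x` is the first variable and `ξ` the second one. It is the
norm of `Z₁` for `p = 1` and that of `L²_{x,ξ}` for `p = 2`. -/
def mixedNorm (p : ℝ≥0∞) (f : α → β → ℝ) : ℝ≥0∞ :=
  eLpNorm (fun ξ => eLpNorm (fun x => f x ξ) p μ) 2 ν

lemma mixedNorm_const_mul_le (p : ℝ≥0∞) (c : ℝ) (f : α → β → ℝ) :
    mixedNorm μ ν p (fun x ξ => c * f x ξ) ≤ ‖c‖ₑ * mixedNorm μ ν p f := by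
  refine eLpNorm_le_mul_eLpNorm_of_ae_le_mul' (c := ‖c‖₊) (.of_forall fun ξ => ?_) 2
  simp only [enorm_eq_self]
  exact eLpNorm_const_smul_le (c := c) (f := fun x => f x ξ)

lemma mixedNorm_add_le [SFinite μ] {p : ℝ≥0∞} (hp1 : 1 ≤ p) (hp : p ≠ ⊤) {f g : α → β → ℝ}
    (hf : Measurable (Function.uncurry f)) (hg : Measurable (Function.uncurry g)) :
    mixedNorm μ ν p (fun x ξ => f x ξ + g x ξ) ≤ mixedNorm μ ν p f + mixedNorm μ ν p g :=
  calc mixedNorm μ ν p (fun x ξ => f x ξ + g x ξ)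
      ≤ eLpNorm (fun ξ => eLpNorm (fun x => f x ξ) p μ + eLpNorm (fun x => g x ξ) p μ) 2 ν :=
        eLpNorm_mono_enorm fun _ => eLpNorm_add_le
          (hf.comp measurable_prodMk_right).aestronglyMeasurable
          (hg.comp measurable_prodMk_right).aestronglyMeasurable hp1
    _ ≤ mixedNorm μ ν p f + mixedNorm μ ν p g :=
        eLpNorm_add_le (measurable_eLpNorm_left hf hp).aestronglyMeasurable
          (measurable_eLpNorm_left hg hp).aestronglyMeasurable one_le_two

lemma mixedNorm_two_eq [SFinite μ] [SFinite ν] {f : α → β → ℝ}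
    (hf : Measurable (Function.uncurry f)) :
    mixedNorm μ ν 2 f = eLpNorm (fun x => eLpNorm (f x) 2 ν) 2 μ := by
  rw [← (ENNReal.pow_right_strictMono two_ne_zero).injective.eq_iff, mixedNorm]
  simp only [eLpNorm_two_sq, enorm_eq_self]
  exact lintegral_lintegral_swap ((hf.comp measurable_swap).enorm.pow_const 2).aemeasurable

lemma mixedNorm_one_le_of_le_mul [SFinite μ] {f g : α → β → ℝ} {a : α → ℝ≥0∞}
    (ha : Measurable a) (hg : Measurable (Function.uncurry g))
    (hfg : ∀ x ξ, ‖f x ξ‖ₑ ≤ a x * ‖g x ξ‖ₑ) :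
    mixedNorm μ ν 1 f ≤ eLpNorm a 2 μ * mixedNorm μ ν 2 g := by
  refine eLpNorm_le_mul_eLpNorm_of_ae_le_mul'' _ (measurable_eLpNorm_left hg
    ENNReal.ofNat_ne_top).aestronglyMeasurable (.of_forall fun ξ => ?_)
  simp only [enorm_eq_self, eLpNorm_one_eq_lintegral_enorm]
  refine (lintegral_mono fun x => hfg x ξ).trans ((lintegral_mul_le_eLpNorm_two ha.aemeasurable
    (hg.comp measurable_prodMk_right).enorm.aemeasurable).trans_eq ?_)
  congr 1

lemma mixedNorm_le_of_le_mul_of_le [SFinite μ] {p : ℝ≥0∞} (hp : p ≠ ⊤) {f g : α → β → ℝ}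
    {a : α → ℝ≥0∞} {A : ℝ≥0∞} (hg : Measurable (Function.uncurry g))
    (hfg : ∀ x ξ, ‖f x ξ‖ₑ ≤ a x * ‖g x ξ‖ₑ) (haA : ∀ x, a x ≤ A) :
    mixedNorm μ ν p f ≤ A * mixedNorm μ ν p g :=
  eLpNorm_le_mul_eLpNorm_of_ae_le_mul'' _ (measurable_eLpNorm_left hg hp).aestronglyMeasurable
    (.of_forall fun ξ => eLpNorm_le_mul_eLpNorm_of_ae_le_mul'' _
      (hg.comp measurable_prodMk_right).aestronglyMeasurable
      (.of_forall fun x => (hfg x ξ).trans (mul_le_mul_left (haA x) _)))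

lemma mixedNorm_two_le_of_le_mul_of_slice_le [SFinite μ] [SFinite ν] {f g : α → β → ℝ}
    {a : α → ℝ≥0∞} {B : ℝ≥0∞} (ha : Measurable a) (hf : Measurable (Function.uncurry f))
    (hg : Measurable (Function.uncurry g)) (hfg : ∀ x ξ, ‖f x ξ‖ₑ ≤ a x * ‖g x ξ‖ₑ)
    (hgB : ∀ x, eLpNorm (g x) 2 ν ≤ B) :
    mixedNorm μ ν 2 f ≤ B * eLpNorm a 2 μ := by
  rw [mixedNorm_two_eq hf]
  refine eLpNorm_le_mul_eLpNorm_of_ae_le_mul'' _ ha.aestronglyMeasurable (.of_forall fun x => ?_)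
  simp only [enorm_eq_self]
  calc eLpNorm (f x) 2 ν ≤ a x * eLpNorm (g x) 2 ν :=
        eLpNorm_le_mul_eLpNorm_of_ae_le_mul'' _
          (hg.comp measurable_prodMk_left).aestronglyMeasurable (.of_forall (hfg x))
    _ ≤ B * a x := by rw [mul_comm]; gcongr; exact hgB x

lemma ofReal_sqrt_integral_integral_sq_le_mixedNorm [SFinite μ] [SFinite ν] {f : α → β → ℝ}
    (hf : Measurable (Function.uncurry f)) :
    ENNReal.ofReal √(∫ x, ∫ ξ, f x ξ ^ 2 ∂ν ∂μ) ≤ mixedNorm μ ν 2 f := by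
  have hsq : ∀ x, ∫ ξ, f x ξ ^ 2 ∂ν = √(∫ ξ, f x ξ ^ 2 ∂ν) ^ 2 := fun x =>
    (sq_sqrt (integral_nonneg fun _ => sq_nonneg _)).symm
  rw [integral_congr_ae (.of_forall hsq), mixedNorm_two_eq hf]
  refine (ofReal_sqrt_integral_sq_le_eLpNorm _ μ).trans (eLpNorm_mono_enorm fun x => ?_)
  rw [Real.enorm_of_nonneg (sqrt_nonneg _), enorm_eq_self]
  exact ofReal_sqrt_integral_sq_le_eLpNorm _ ν

lemma ofReal_Z1_le_mixedNorm (f : E3 → E3 → ℝ) :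
    ENNReal.ofReal (Z1 f) ≤ mixedNorm volume volume 1 f := by
  refine (ofReal_sqrt_integral_sq_le_eLpNorm _ _).trans (eLpNorm_mono_enorm fun ξ => ?_)
  rw [enorm_eq_self, eLpNorm_one_eq_lintegral_enorm]
  simpa only [enorm_abs] using enorm_integral_le_lintegral_enorm fun x => |f x ξ|

end MixedNorm

/-! ### Monomials in three commuting derivations -/

section MultiIndex

/-- The multi-index of length one in direction `i`. -/
def unitIdx (i : Fin 3) : MIdx := ![(1, 0, 0), (0, 1, 0), (0, 0, 1)] i

lemma deg_add (α β : MIdx) : deg (α + β) = deg α + deg β := by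
  simp only [deg, Prod.fst_add, Prod.snd_add]; ring

lemma deg_unitIdx (i : Fin 3) : deg (unitIdx i) = 1 := by fin_cases i <;> rfl

lemma mem_midx {N : ℕ} {α : MIdx} : α ∈ midx N ↔ deg α ≤ N := by
  simp only [midx, Finset.mem_filter, Finset.mem_product, Finset.mem_range]
  rw [deg]
  omega

lemma mem_midxP {N : ℕ} {α β : MIdx} : (α, β) ∈ midxP N ↔ deg α + deg β ≤ N := by
  simp only [midxP, Finset.mem_filter, Finset.mem_product, mem_midx]
  omega

lemma eq_zero_or_unitIdx_of_mem_midx_one {α : MIdx} (hα : α ∈ midx 1) :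
    α = 0 ∨ ∃ i, α = unitIdx i := by
  have hmidx : midx 1 = {0, unitIdx 0, unitIdx 1, unitIdx 2} := by decide
  simp only [hmidx, Finset.mem_insert, Finset.mem_singleton] at hα
  rcases hα with h | h | h | h
  exacts [.inl h, .inr ⟨0, h⟩, .inr ⟨1, h⟩, .inr ⟨2, h⟩]

variable {R : Type*} [Monoid R]

/-- The monomial `d₀^α₁ d₁^α₂ d₂^α₃` attached to a multi-index `α`. -/
def multiPow (d : Fin 3 → R) (α : MIdx) : R := d 0 ^ α.1 * d 1 ^ α.2.1 * d 2 ^ α.2.2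

lemma multiPow_zero (d : Fin 3 → R) : multiPow d 0 = 1 := by simp [multiPow]

lemma multiPow_unitIdx (d : Fin 3 → R) (i : Fin 3) : multiPow d (unitIdx i) = d i := by
  fin_cases i <;> simp [multiPow, unitIdx]

lemma commute_multiPow_right {a : R} {d : Fin 3 → R} (h : ∀ i, Commute a (d i)) (α : MIdx) :
    Commute a (multiPow d α) :=
  (((h 0).pow_right _).mul_right ((h 1).pow_right _)).mul_right ((h 2).pow_right _)

lemma multiPow_add {d : Fin 3 → R} (hd : ∀ i j, Commute (d i) (d j)) (α β : MIdx) :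
    multiPow d (α + β) = multiPow d α * multiPow d β := by
  have h10 := ((hd 1 0).pow_pow α.2.1 β.1).eq
  have h2 := (((hd 2 0).pow_pow α.2.2 β.1).mul_right ((hd 2 1).pow_pow α.2.2 β.2.1)).eq
  simp only [multiPow, Prod.fst_add, Prod.snd_add, pow_add]
  calc d 0 ^ α.1 * d 0 ^ β.1 * (d 1 ^ α.2.1 * d 1 ^ β.2.1) * (d 2 ^ α.2.2 * d 2 ^ β.2.2)
      = d 0 ^ α.1 * (d 0 ^ β.1 * d 1 ^ α.2.1) * d 1 ^ β.2.1 * d 2 ^ α.2.2 * d 2 ^ β.2.2 := by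
        simp only [mul_assoc]
    _ = d 0 ^ α.1 * d 1 ^ α.2.1 * (d 0 ^ β.1 * d 1 ^ β.2.1 * d 2 ^ α.2.2) * d 2 ^ β.2.2 := by
        rw [← h10]; simp only [mul_assoc]
    _ = d 0 ^ α.1 * d 1 ^ α.2.1 * d 2 ^ α.2.2 * (d 0 ^ β.1 * d 1 ^ β.2.1 * d 2 ^ β.2.2) := by
        rw [← h2]; simp only [mul_assoc]

end MultiIndex

/-! ### Derivatives of Schwartz functions on phase space -/

section PhaseSpace

/-- Schwartz functions of `(x, ξ) ∈ ℝ³ × ℝ³`. -/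
abbrev PhaseSchwartz : Type := 𝓢(E3 × E3, ℝ)

/-- The derivative in the direction `m`, as an endomorphism of the Schwartz space. -/
def dirDeriv (m : E3 × E3) : Module.End ℝ PhaseSchwartz :=
  (LineDeriv.lineDerivOpCLM ℝ PhaseSchwartz m).toLinearMap

/-- `∂_{x_i}`. -/
def spaceDeriv (i : Fin 3) : Module.End ℝ PhaseSchwartz := dirDeriv (basisVec i, 0)

/-- `∂_{ξ_i}`. -/
def velDeriv (i : Fin 3) : Module.End ℝ PhaseSchwartz := dirDeriv (0, basisVec i)

lemma dirDeriv_apply (m : E3 × E3) (h : PhaseSchwartz) (z : E3 × E3) :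
    dirDeriv m h z = fderiv ℝ h z m :=
  SchwartzMap.lineDerivOp_apply_eq_fderiv m h z

lemma commute_dirDeriv (m n : E3 × E3) : Commute (dirDeriv m) (dirDeriv n) := by
  refine LinearMap.ext fun h => SchwartzMap.ext fun z => ?_
  have hd : DifferentiableAt ℝ (fderiv ℝ h) z :=
    ((h.smooth 2).fderiv_right (m := 1) (by norm_num)).differentiable (by norm_num) z
  have hcoe (k : E3 × E3) : ⇑(dirDeriv k h) = fun y => fderiv ℝ h y k :=
    funext (dirDeriv_apply k h)
  have hsecond (k l : E3 × E3) : dirDeriv k (dirDeriv l h) z = fderiv ℝ (fderiv ℝ h) z k l := by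
    rw [dirDeriv_apply, hcoe, fderiv_clm_apply hd (by fun_prop)]
    simp
  simp only [Module.End.mul_apply, hsecond]
  exact (h.smooth 2).contDiffAt.isSymmSndFDerivAt (by simp) m n

lemma pdx_curry {f : E3 × E3 → ℝ} {x ξ : E3} (hf : DifferentiableAt ℝ f (x, ξ)) (i : Fin 3) :
    pdx i (fun y ζ => f (y, ζ)) x ξ = fderiv ℝ f (x, ξ) (basisVec i, 0) := by
  have h : HasFDerivAt (fun y => f (y, ξ)) _ x :=
    hf.hasFDerivAt.comp x (hasFDerivAt_prodMk_left x ξ)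
  rw [pdx, h.fderiv]
  rfl

lemma pd_curry {f : E3 × E3 → ℝ} {x ξ : E3} (hf : DifferentiableAt ℝ f (x, ξ)) (i : Fin 3) :
    pd i (fun ζ => f (x, ζ)) ξ = fderiv ℝ f (x, ξ) (0, basisVec i) := by
  have h : HasFDerivAt (fun ζ => f (x, ζ)) _ ξ :=
    hf.hasFDerivAt.comp ξ (hasFDerivAt_prodMk_right x ξ)
  rw [pd, h.fderiv]
  rfl

lemma pdx_uc (i : Fin 3) (h : PhaseSchwartz) : pdx i (uc h) = uc (spaceDeriv i h) := by
  ext x ξ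
  exact (pdx_curry h.differentiableAt i).trans (dirDeriv_apply _ h _).symm

lemma pd_uc (i : Fin 3) (h : PhaseSchwartz) (x : E3) : pd i (uc h x) = uc (velDeriv i h) x := by
  ext ξ
  exact (pd_curry h.differentiableAt i).trans (dirDeriv_apply _ h _).symm

lemma pdM_eq_multiPow {T : PhaseSchwartz → E3 → ℝ} {d : Fin 3 → Module.End ℝ PhaseSchwartz}
    (hT : ∀ i h, pd i (T h) = T (d i h)) (α : MIdx) (h : PhaseSchwartz) :
    pdM α (T h) = T (multiPow d α h) := by
  have hiter (i : Fin 3) (n : ℕ) (h : PhaseSchwartz) : (pd i)^[n] (T h) = T ((d i ^ n) h) := by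
    rw [Module.End.pow_apply]
    exact (Function.Semiconj.iterate_right (fun h => (hT i h).symm) n h).symm
  simp only [pdM, hiter, multiPow, Module.End.mul_apply]

lemma pdxM_uc (α : MIdx) (h : PhaseSchwartz) : pdxM α (uc h) = uc (multiPow spaceDeriv α h) := by
  have hiter (i : Fin 3) (n : ℕ) (h : PhaseSchwartz) :
      (pdx i)^[n] (uc h) = uc ((spaceDeriv i ^ n) h) := by
    rw [Module.End.pow_apply]
    exact (Function.Semiconj.iterate_right (fun h => (pdx_uc i h).symm) n h).symm
  simp only [pdxM, hiter, multiPow, Module.End.mul_apply]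

lemma pdab_uc (α β : MIdx) (u : PhaseSchwartz) :
    pdab α β (uc u) = uc ((multiPow velDeriv β * multiPow spaceDeriv α) u) := by
  ext x : 1
  rw [pdab, pdxM_uc]
  exact pdM_eq_multiPow (T := fun h => uc h x) (fun i h => pd_uc i h x) β _

/-- `P` is a derivative `∂_x^α ∂_ξ^β` with `|α| = a` and `|β| = b`. -/
def IsMixedDeriv (a b : ℕ) (P : Module.End ℝ PhaseSchwartz) : Prop :=
  ∃ α β : MIdx, deg α = a ∧ deg β = b ∧ P = multiPow velDeriv β * multiPow spaceDeriv α

namespace IsMixedDeriv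

variable {a b a' b' : ℕ} {P P' : Module.End ℝ PhaseSchwartz}

lemma space (α : MIdx) : IsMixedDeriv (deg α) 0 (multiPow spaceDeriv α) :=
  ⟨α, 0, rfl, rfl, by rw [multiPow_zero, one_mul]⟩

lemma vel (β : MIdx) : IsMixedDeriv 0 (deg β) (multiPow velDeriv β) :=
  ⟨0, β, rfl, rfl, by rw [multiPow_zero, mul_one]⟩

lemma one : IsMixedDeriv 0 0 1 := multiPow_zero spaceDeriv ▸ space 0

lemma exists_eq_multiPow_spaceDeriv (hP : IsMixedDeriv a 0 P) :
    ∃ α, deg α = a ∧ P = multiPow spaceDeriv α := by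
  obtain ⟨α, β, hα, hβ, rfl⟩ := hP
  obtain rfl : β = 0 := by
    simp only [deg, Nat.add_eq_zero_iff] at hβ
    exact Prod.ext hβ.1.1 (Prod.ext hβ.1.2 hβ.2)
  exact ⟨α, hα, by rw [multiPow_zero, one_mul]⟩

lemma of_spaceDeriv (i : Fin 3) : IsMixedDeriv 1 0 (spaceDeriv i) := by
  simpa only [multiPow_unitIdx, deg_unitIdx] using space (unitIdx i)

lemma of_velDeriv (i : Fin 3) : IsMixedDeriv 0 1 (velDeriv i) := by
  simpa only [multiPow_unitIdx, deg_unitIdx] using vel (unitIdx i)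

lemma mul (hP : IsMixedDeriv a b P) (hP' : IsMixedDeriv a' b' P') :
    IsMixedDeriv (a + a') (b + b') (P * P') := by
  obtain ⟨α, β, rfl, rfl, rfl⟩ := hP
  obtain ⟨α', β', rfl, rfl, rfl⟩ := hP'
  refine ⟨α + α', β + β', deg_add _ _, deg_add _ _, ?_⟩
  have hswap : Commute (multiPow spaceDeriv α) (multiPow velDeriv β') :=
    commute_multiPow_right
      (fun j => (commute_multiPow_right (fun i => commute_dirDeriv _ _) α).symm) β'
  rw [multiPow_add (d := velDeriv) fun i j => commute_dirDeriv _ _,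
    multiPow_add (d := spaceDeriv) fun i j => commute_dirDeriv _ _, mul_assoc,
    ← mul_assoc (multiPow spaceDeriv α), hswap.eq]
  simp only [mul_assoc]

end IsMixedDeriv

/-- Multiplication by a function `g` of the velocity; it is zero unless `g` has temperate
growth. -/
def velMul (g : E3 → ℝ) : Module.End ℝ PhaseSchwartz :=
  (SchwartzMap.smulLeftCLM ℝ fun z : E3 × E3 => g z.2).toLinearMap

variable {g : E3 → ℝ}

lemma velMul_apply (hg : g.HasTemperateGrowth) (h : PhaseSchwartz) (z : E3 × E3) :
    velMul g h z = g z.2 * h z :=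
  SchwartzMap.smulLeftCLM_apply_apply
    (hg.comp (ContinuousLinearMap.snd ℝ E3 E3).hasTemperateGrowth) h z

lemma dirDeriv_velMul_apply (hg : g.HasTemperateGrowth) (m : E3 × E3) (h : PhaseSchwartz)
    (z : E3 × E3) :
    dirDeriv m (velMul g h) z = g z.2 * dirDeriv m h z + fderiv ℝ g z.2 m.2 * h z := by
  have hg' : HasFDerivAt (fun z : E3 × E3 => g z.2)
      ((fderiv ℝ g z.2).comp (ContinuousLinearMap.snd ℝ E3 E3)) z :=
    (hg.1.differentiable (by simp) z.2).hasFDerivAt.comp z hasFDerivAt_snd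
  rw [dirDeriv_apply, dirDeriv_apply, funext (velMul_apply hg h),
    (hg'.fun_mul (h.hasFDerivAt z)).fderiv]
  simp [mul_comm]

lemma spaceDeriv_velMul (hg : g.HasTemperateGrowth) (i : Fin 3) (h : PhaseSchwartz) :
    spaceDeriv i (velMul g h) = velMul g (spaceDeriv i h) := by
  ext z
  rw [spaceDeriv, dirDeriv_velMul_apply hg, velMul_apply hg, map_zero, zero_mul, add_zero]

lemma velDeriv_velMul_apply (hg : g.HasTemperateGrowth) (i : Fin 3) (h : PhaseSchwartz)
    (z : E3 × E3) :
    velDeriv i (velMul g h) z = g z.2 * velDeriv i h z + pd i g z.2 * h z :=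
  dirDeriv_velMul_apply hg _ h z

end PhaseSpace

/-! ### The bracket and the Maxwellian -/

section Maxwellian

lemma one_le_jap (ξ : E3) : 1 ≤ jap ξ := by
  rw [jap, one_le_sqrt]
  exact le_add_of_nonneg_right (by positivity)

lemma jap_pos (ξ : E3) : 0 < jap ξ := one_pos.trans_le (one_le_jap ξ)

lemma jap_le_one_add_norm (ξ : E3) : jap ξ ≤ 1 + ‖ξ‖ :=
  (sqrt_le_left (by positivity)).2 (by nlinarith [norm_nonneg ξ])

lemma norm_le_jap (ξ : E3) : ‖ξ‖ ≤ jap ξ := le_sqrt_of_sq_le (by linarith)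

lemma hasTemperateGrowth_jap_rpow (r : ℝ) : (fun ξ : E3 => jap ξ ^ r).HasTemperateGrowth := by
  have heq (ξ : E3) : jap ξ ^ r = (1 + ‖ξ‖ ^ 2) ^ (r / 2) := by
    rw [jap, sqrt_eq_rpow, ← rpow_mul (by positivity)]
    ring_nf
  simpa only [heq] using Function.hasTemperateGrowth_one_add_norm_sq_rpow E3 (r / 2)

lemma hasTemperateGrowth_coord (i : Fin 3) : (fun ξ : E3 => ξ i).HasTemperateGrowth :=
  (EuclideanSpace.proj i : E3 →L[ℝ] ℝ).hasTemperateGrowth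

lemma hasTemperateGrowth_exp_neg_mul_norm_sq {H : Type*} [NormedAddCommGroup H]
    [InnerProductSpace ℝ H] {c : ℝ} (hc : 0 ≤ c) :
    (fun x : H => exp (-c * ‖x‖ ^ 2)).HasTemperateGrowth := by
  have hsmooth : ContDiff ℝ ∞ fun s : ℝ => exp (-c * s) := by fun_prop
  have hunique : UniqueDiffOn ℝ (Set.Ioi (-1 : ℝ)) := isOpen_Ioi.uniqueDiffOn
  refine Function.HasTemperateGrowth.comp' (g := fun s : ℝ => exp (-c * s)) (t := Set.Ioi (-1))
    ?_ hunique hsmooth.contDiffOn (fun N => ⟨0, (1 + c) ^ N * exp c, by positivity, ?_⟩)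
    (Function.hasTemperateGrowth_norm_sq H)
  · rintro - ⟨x, rfl⟩
    exact (by norm_num : (-1 : ℝ) < 0).trans_le (sq_nonneg ‖x‖)
  · intro n hn s hs
    rw [norm_iteratedFDerivWithin_eq_norm_iteratedDerivWithin,
      iteratedDerivWithin_eq_iteratedDeriv hunique
        (hsmooth.of_le (by exact_mod_cast le_top)).contDiffAt hs, iteratedDeriv_exp_const_mul,
      pow_zero, mul_one, norm_mul, norm_pow, norm_neg, norm_of_nonneg hc, norm_of_nonneg
        (exp_pos _).le]
    have hs' : -1 < s := hs
    gcongr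
    · exact (pow_le_pow_left₀ hc (by linarith) n).trans (pow_le_pow_right₀ (by linarith) hn)
    · nlinarith

lemma sqrtM_eq (ξ : E3) :
    sqrtM ξ = (2 * π) ^ (-(3 : ℝ) / 4) * exp (-(1 / 4) * ‖ξ‖ ^ 2) := by
  rw [sqrtM, Mx, sqrt_eq_iff_mul_self_eq (by positivity) (by positivity), mul_mul_mul_comm,
    ← rpow_add (by positivity), ← exp_add]
  congr 2 <;> ring

lemma sqrtM_pos (ξ : E3) : 0 < sqrtM ξ := by rw [sqrtM_eq]; positivity

lemma hasTemperateGrowth_sqrtM : sqrtM.HasTemperateGrowth := by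
  rw [funext sqrtM_eq]
  exact (Function.HasTemperateGrowth.const _).mul
    (hasTemperateGrowth_exp_neg_mul_norm_sq (by norm_num))

lemma hasFDerivAt_sqrtM (ξ : E3) :
    HasFDerivAt sqrtM (-(1 / 2 * sqrtM ξ) • innerSL ℝ ξ) ξ := by
  have hexp := (((hasStrictFDerivAt_norm_sq ξ).hasFDerivAt.const_mul (-(1 / 4 : ℝ))).exp).const_mul
    ((2 * π) ^ (-(3 : ℝ) / 4))
  rw [funext sqrtM_eq]
  refine hexp.congr_fderiv ?_
  module

lemma pd_sqrtM (i : Fin 3) (ξ : E3) : pd i sqrtM ξ = -(1 / 2) * (ξ i * sqrtM ξ) := by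
  rw [pd, (hasFDerivAt_sqrtM ξ).fderiv]
  simp [EuclideanSpace.inner_single_right]
  ring

lemma sqrtM_mul_one_add_norm_pow_le (k : ℕ) (ξ : E3) :
    sqrtM ξ * (1 + ‖ξ‖) ^ k ≤ (2 * π) ^ (-(3 : ℝ) / 4) * exp (k ^ 2) := by
  have hpow : (1 + ‖ξ‖) ^ k ≤ exp (k * ‖ξ‖) := by
    rw [exp_nat_mul]
    gcongr
    linarith [add_one_le_exp ‖ξ‖]
  calc sqrtM ξ * (1 + ‖ξ‖) ^ k
      ≤ (2 * π) ^ (-(3 : ℝ) / 4) * exp (-(1 / 4) * ‖ξ‖ ^ 2) * exp (k * ‖ξ‖) := by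
        rw [sqrtM_eq]; gcongr
    _ = (2 * π) ^ (-(3 : ℝ) / 4) * exp (-(1 / 4) * ‖ξ‖ ^ 2 + k * ‖ξ‖) := by
        rw [mul_assoc, ← exp_add]
    _ ≤ (2 * π) ^ (-(3 : ℝ) / 4) * exp (k ^ 2) := by
        gcongr
        nlinarith [sq_nonneg (‖ξ‖ - 2 * k)]

/-- The velocity multipliers under the Landau convolution: smooth functions of temperate growth
that decay rapidly. -/
structure IsRapidMultiplier (g : E3 → ℝ) : Prop where
  hasTemperateGrowth : g.HasTemperateGrowth
  exists_decay : ∀ k : ℕ, ∃ K, ∀ ξ, |g ξ| * (1 + ‖ξ‖) ^ k ≤ K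

lemma isRapidMultiplier_sqrtM : IsRapidMultiplier sqrtM where
  hasTemperateGrowth := hasTemperateGrowth_sqrtM
  exists_decay k := ⟨_, fun ξ => by
    rw [abs_of_pos (sqrtM_pos ξ)]
    exact sqrtM_mul_one_add_norm_pow_le k ξ⟩

lemma IsRapidMultiplier.coord_mul {g : E3 → ℝ} (hg : IsRapidMultiplier g) (i : Fin 3) :
    IsRapidMultiplier fun ξ => ξ i * g ξ where
  hasTemperateGrowth := (hasTemperateGrowth_coord i).mul hg.hasTemperateGrowth
  exists_decay k := by
    obtain ⟨K, hK⟩ := hg.exists_decay (k + 1)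
    refine ⟨K, fun ξ => le_trans ?_ (hK ξ)⟩
    have hcoord : |ξ i| ≤ 1 + ‖ξ‖ := (PiLp.norm_apply_le ξ i).trans (by linarith)
    calc |ξ i * g ξ| * (1 + ‖ξ‖) ^ k = |ξ i| * (|g ξ| * (1 + ‖ξ‖) ^ k) := by
          rw [abs_mul, mul_assoc]
      _ ≤ (1 + ‖ξ‖) * (|g ξ| * (1 + ‖ξ‖) ^ k) := by gcongr
      _ = |g ξ| * (1 + ‖ξ‖) ^ (k + 1) := by ring

lemma velDeriv_velMul_sqrtM (i : Fin 3) (h : PhaseSchwartz) :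
    velDeriv i (velMul sqrtM h)
      = velMul sqrtM (velDeriv i h) - (1 / 2 : ℝ) • velMul (fun ξ => ξ i * sqrtM ξ) h := by
  ext z
  rw [velDeriv_velMul_apply hasTemperateGrowth_sqrtM, sub_apply, smul_apply,
    velMul_apply hasTemperateGrowth_sqrtM,
    velMul_apply (isRapidMultiplier_sqrtM.coord_mul i).hasTemperateGrowth, pd_sqrtM, smul_eq_mul]
  ring

end Maxwellian

/-! ### The Landau kernel and the collision term -/

section Landau

lemma abs_Bij_le (γ : ℝ) (i j : Fin 3) (η : E3) : |Bij γ i j η| ≤ 2 * ‖η‖ ^ (γ + 2) := by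
  have hcoord (k : Fin 3) : |η k| ≤ ‖η‖ := PiLp.norm_apply_le η k
  have hproj : |η i * η j / ‖η‖ ^ 2| ≤ 1 := by
    rw [abs_div, abs_mul, abs_of_nonneg (sq_nonneg ‖η‖), sq]
    exact div_le_one_of_le₀ (mul_le_mul (hcoord i) (hcoord j) (abs_nonneg _) (norm_nonneg _))
      (by positivity)
  have hdelta : |(if i = j then (1 : ℝ) else 0)| ≤ 1 := by split_ifs <;> simp
  rw [Bij, abs_mul, abs_of_nonneg (rpow_nonneg (norm_nonneg η) _)]
  gcongr
  exact (abs_sub _ _).trans (by linarith)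

lemma Bij_comm (γ : ℝ) (i j : Fin 3) : Bij γ i j = Bij γ j i := by
  ext η
  simp only [Bij, eq_comm (a := i), mul_comm (η i)]

lemma sum_Bij_mul_coord (γ : ℝ) (i : Fin 3) (η : E3) : ∑ j, Bij γ i j η * η j = 0 := by
  rcases eq_or_ne η 0 with rfl | hη
  · simp
  have hnorm : ∑ j, η j * η j = ‖η‖ ^ 2 := by
    rw [EuclideanSpace.norm_sq_eq]
    exact Finset.sum_congr rfl fun j _ => by rw [norm_eq_abs, sq_abs, sq]
  have hproj : ∑ j, ((if i = j then η j else 0) - η i / ‖η‖ ^ 2 * (η j * η j)) = 0 := by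
    rw [Finset.sum_sub_distrib, ← Finset.mul_sum, hnorm, Finset.sum_ite_eq,
      if_pos (Finset.mem_univ i), div_mul_cancel₀ _ (by simpa using hη), sub_self]
  calc ∑ j, Bij γ i j η * η j
      = ‖η‖ ^ (γ + 2) * ∑ j, ((if i = j then η j else 0) - η i / ‖η‖ ^ 2 * (η j * η j)) := by
        rw [Finset.mul_sum]
        refine Finset.sum_congr rfl fun j _ => ?_
        rw [Bij]
        split_ifs <;> ring
    _ = 0 := by rw [hproj, mul_zero]

lemma measurable_Bij (γ : ℝ) (i j : Fin 3) : Measurable (Bij γ i j) := by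
  unfold Bij
  fun_prop

lemma isTemperedKernel_Bij {γ : ℝ} (hγ : -5 < γ) (hγ' : γ ≤ -2) (i j : Fin 3) :
    IsTemperedKernel (Bij γ i j) (ContinuousLinearMap.inr ℝ E3 E3) where
  aestronglyMeasurable := (measurable_Bij γ i j).aestronglyMeasurable
  exists_integrable := by
    obtain ⟨C, -, h⟩ := exists_integral_norm_rpow_neg_mul_le (volume : Measure E3)
      (a := -(γ + 2)) (r := 4 - (γ + 2)) (by linarith) (by simp; linarith) (by simp; linarith)
    refine ⟨4 - (γ + 2), by linarith, ((h 0).1.const_mul 2).mono' ?_ (.of_forall fun η => ?_)⟩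
    · exact ((measurable_Bij γ i j).mul (by fun_prop)).aestronglyMeasurable
    · have hnorm : ‖ContinuousLinearMap.inr ℝ E3 E3 η‖ = ‖η‖ := by simp [Prod.norm_def]
      rw [hnorm, norm_mul, norm_of_nonneg (by positivity : 0 ≤ (1 + ‖η‖) ^ (-(4 - (γ + 2)))),
        zero_sub, norm_neg, neg_neg, ← mul_assoc]
      gcongr
      exact abs_Bij_le γ i j η

/-- The convolution `B^{ij} ∗_ξ h` of a phase-space function in the velocity variable. -/
def landauConv (γ : ℝ) (i j : Fin 3) (h : PhaseSchwartz) : E3 × E3 → ℝ :=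
  kernelConv (Bij γ i j) (ContinuousLinearMap.inr ℝ E3 E3) h

lemma landauConv_eq_integral (γ : ℝ) (i j : Fin 3) (h : PhaseSchwartz) (x ξ : E3) :
    landauConv γ i j h (x, ξ) = ∫ ξ', Bij γ i j (ξ - ξ') * h (x, ξ') := by
  rw [← integral_sub_left_eq_self (fun ξ' => Bij γ i j (ξ - ξ') * h (x, ξ')) volume ξ]
  simp [landauConv, kernelConv]

lemma landauConv_comm (γ : ℝ) (i j : Fin 3) (h : PhaseSchwartz) :
    landauConv γ i j h = landauConv γ j i h := by
  rw [landauConv, landauConv, Bij_comm]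

lemma landauConv_smul (γ : ℝ) (i j : Fin 3) (c : ℝ) (h : PhaseSchwartz) (z : E3 × E3) :
    landauConv γ i j (c • h) z = c * landauConv γ i j h z := by
  simp only [landauConv, kernelConv, smul_apply, smul_eq_mul, mul_left_comm _ c,
    integral_const_mul]

section

variable {γ : ℝ} (hγ : -5 < γ) (hγ' : γ ≤ -2) (i j : Fin 3)
include hγ hγ'

lemma landauConv_sub (f g : PhaseSchwartz) (z : E3 × E3) :
    landauConv γ i j (f - g) z = landauConv γ i j f z - landauConv γ i j g z :=
  (isTemperedKernel_Bij hγ hγ' i j).kernelConv_sub f g z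

lemma differentiable_landauConv (h : PhaseSchwartz) : Differentiable ℝ (landauConv γ i j h) :=
  (isTemperedKernel_Bij hγ hγ' i j).differentiable_kernelConv h

lemma fderiv_landauConv_apply (h : PhaseSchwartz) (z m : E3 × E3) :
    fderiv ℝ (landauConv γ i j h) z m = landauConv γ i j (dirDeriv m h) z :=
  (isTemperedKernel_Bij hγ hγ' i j).fderiv_kernelConv_apply h z m

lemma fderiv_landauConv_mul_apply (f g : PhaseSchwartz) (z m : E3 × E3) :
    fderiv ℝ (fun z => landauConv γ i j f z * g z) z m
      = landauConv γ i j (dirDeriv m f) z * g z + landauConv γ i j f z * dirDeriv m g z := by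
  rw [fderiv_fun_mul (differentiable_landauConv hγ hγ' i j f z) g.differentiableAt]
  simp only [add_apply, smul_apply, smul_eq_mul, fderiv_landauConv_apply hγ hγ', dirDeriv_apply]
  ring

lemma integrable_Bij_sub_mul (h : PhaseSchwartz) (x ξ : E3) :
    Integrable fun ξ' => Bij γ i j (ξ - ξ') * h (x, ξ') := by
  simpa using ((isTemperedKernel_Bij hγ hγ' i j).integrable_smul h (x, ξ)).comp_sub_left ξ

lemma sum_landauConv_coord_mul {g : E3 → ℝ} (hg : g.HasTemperateGrowth) (h : PhaseSchwartz)
    (z : E3 × E3) :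
    ∑ j, landauConv γ i j (velMul (fun ξ => ξ j * g ξ) h) z
      = ∑ j, z.2 j * landauConv γ i j (velMul g h) z := by
  obtain ⟨x, ξ⟩ := z
  have hint (j : Fin 3) (f : PhaseSchwartz) := integrable_Bij_sub_mul hγ hγ' i j f x ξ
  simp only [landauConv_eq_integral, ← integral_const_mul]
  rw [← integral_finsetSum _ fun j _ => hint j _,
    ← integral_finsetSum _ fun j _ => (hint j _).const_mul _]
  congr 1 with ξ'
  rw [← sub_eq_zero, ← Finset.sum_sub_distrib]
  calc ∑ j, (Bij γ i j (ξ - ξ') * velMul (fun ξ => ξ j * g ξ) h (x, ξ')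
        - ξ j * (Bij γ i j (ξ - ξ') * velMul g h (x, ξ')))
      = (∑ j, Bij γ i j (ξ - ξ') * (ξ - ξ') j) * -(g ξ' * h (x, ξ')) := by
        rw [Finset.sum_mul]
        refine Finset.sum_congr rfl fun j _ => ?_
        have hcoord : (fun ξ : E3 => ξ j * g ξ).HasTemperateGrowth :=
          (hasTemperateGrowth_coord j).mul hg
        rw [velMul_apply hcoord, velMul_apply hg, PiLp.sub_apply]
        ring
    _ = 0 := by rw [sum_Bij_mul_coord, zero_mul]

lemma integral_Bij_collision (f : PhaseSchwartz) (x ξ : E3) :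
    ∫ ξ', Bij γ i j (ξ - ξ') * (uc f x ξ' * pd j (uc f x) ξ - pd j (uc f x) ξ' * uc f x ξ)
      = landauConv γ i j f (x, ξ) * velDeriv j f (x, ξ)
        - landauConv γ i j (velDeriv j f) (x, ξ) * f (x, ξ) := by
  rw [pd_uc, landauConv_eq_integral, landauConv_eq_integral, ← integral_mul_const,
    ← integral_mul_const, ← integral_sub
      ((integrable_Bij_sub_mul hγ hγ' i j f x ξ).mul_const _)
      ((integrable_Bij_sub_mul hγ hγ' i j _ x ξ).mul_const _)]
  congr 1 with ξ'
  simp only [uc]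
  ring

end

lemma sum_sum_landauConv_antisymm (γ : ℝ) (u : PhaseSchwartz) (z : E3 × E3) :
    ∑ i, ∑ j, (landauConv γ i j (velMul sqrtM (velDeriv i u)) z * velDeriv j u z
      - landauConv γ i j (velMul sqrtM (velDeriv j u)) z * velDeriv i u z) = 0 := by
  simp only [Finset.sum_sub_distrib]
  rw [Finset.sum_comm, sub_eq_zero]
  simp only [fun i j => landauConv_comm γ i j]

/-- The collision flux conjugated by `√M`: by the kernel identity `Σⱼ Bⁱʲ(η) ηⱼ = 0`,
`Γ(u,u) = Σᵢ (∂_{ξᵢ} - ξᵢ/2) Jᵢ` for this flux `J`. -/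
def landauFlux (γ : ℝ) (i : Fin 3) (u : PhaseSchwartz) (z : E3 × E3) : ℝ :=
  ∑ j, (landauConv γ i j (velMul sqrtM u) z * velDeriv j u z
    - landauConv γ i j (velMul sqrtM (velDeriv j u)) z * u z)

section

variable {γ : ℝ} (hγ : -5 < γ) (hγ' : γ ≤ -2)
include hγ hγ'

lemma sum_landauConv_velMul_sqrtM (i : Fin 3) (u : PhaseSchwartz) (z : E3 × E3) :
    ∑ j, (landauConv γ i j (velMul sqrtM u) z * velDeriv j (velMul sqrtM u) z
        - landauConv γ i j (velDeriv j (velMul sqrtM u)) z * velMul sqrtM u z)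
      = sqrtM z.2 * landauFlux γ i u z := by
  have hkernel := sum_landauConv_coord_mul hγ hγ' i hasTemperateGrowth_sqrtM u z
  have hterm (j : Fin 3) :
      landauConv γ i j (velMul sqrtM u) z * velDeriv j (velMul sqrtM u) z
        - landauConv γ i j (velDeriv j (velMul sqrtM u)) z * velMul sqrtM u z
      = sqrtM z.2 * (landauConv γ i j (velMul sqrtM u) z * velDeriv j u z
          - landauConv γ i j (velMul sqrtM (velDeriv j u)) z * u z)
        + sqrtM z.2 * u z / 2 *
          (landauConv γ i j (velMul (fun ξ => ξ j * sqrtM ξ) u) z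
            - z.2 j * landauConv γ i j (velMul sqrtM u) z) := by
    rw [velDeriv_velMul_apply hasTemperateGrowth_sqrtM, velDeriv_velMul_sqrtM,
      landauConv_sub hγ hγ', landauConv_smul, velMul_apply hasTemperateGrowth_sqrtM, pd_sqrtM]
    ring
  simp only [hterm, Finset.sum_add_distrib, ← Finset.mul_sum, Finset.sum_sub_distrib, hkernel,
    sub_self, mul_zero, add_zero, landauFlux]

lemma differentiable_landauFlux (i : Fin 3) (u : PhaseSchwartz) :
    Differentiable ℝ (landauFlux γ i u) :=
  Differentiable.fun_sum fun j _ =>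
    ((differentiable_landauConv hγ hγ' i j _).mul (velDeriv j u).differentiable).sub
      ((differentiable_landauConv hγ hγ' i j _).mul u.differentiable)

lemma Qop_velMul_sqrtM (u : PhaseSchwartz) (x ξ : E3) :
    Qop γ (uc (velMul sqrtM u) x) (uc (velMul sqrtM u) x) ξ
      = sqrtM ξ * ∑ i, (fderiv ℝ (landauFlux γ i u) (x, ξ) (0, basisVec i)
          - 1 / 2 * ξ i * landauFlux γ i u (x, ξ)) := by
  rw [Qop, Finset.mul_sum]
  refine Finset.sum_congr rfl fun i _ => ?_
  set F := velMul sqrtM u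
  have hdiff (j : Fin 3) : Differentiable ℝ fun z =>
      landauConv γ i j F z * velDeriv j F z - landauConv γ i j (velDeriv j F) z * F z :=
    ((differentiable_landauConv hγ hγ' i j _).mul (velDeriv j F).differentiable).sub
      ((differentiable_landauConv hγ hγ' i j _).mul F.differentiable)
  have hsqrtM : HasFDerivAt (fun z : E3 × E3 => sqrtM z.2)
      ((-(1 / 2 * sqrtM ξ) • innerSL ℝ ξ).comp (ContinuousLinearMap.snd ℝ E3 E3)) (x, ξ) :=
    HasFDerivAt.comp (g := sqrtM) (x, ξ) (hasFDerivAt_sqrtM ξ) hasFDerivAt_snd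
  calc ∑ j, pd i (fun ζ => ∫ ξ', Bij γ i j (ζ - ξ') *
        (uc F x ξ' * pd j (uc F x) ζ - pd j (uc F x) ξ' * uc F x ζ)) ξ
      = ∑ j, fderiv ℝ (fun z => landauConv γ i j F z * velDeriv j F z
          - landauConv γ i j (velDeriv j F) z * F z) (x, ξ) (0, basisVec i) := by
        simp only [integral_Bij_collision hγ hγ', pd_curry (hdiff _ (x, ξ))]
    _ = fderiv ℝ (fun z => sqrtM z.2 * landauFlux γ i u z) (x, ξ) (0, basisVec i) := by
        simp only [← sum_landauConv_velMul_sqrtM hγ hγ']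
        rw [fderiv_fun_sum fun j _ => hdiff j (x, ξ), sum_apply]
    _ = sqrtM ξ * (fderiv ℝ (landauFlux γ i u) (x, ξ) (0, basisVec i)
          - 1 / 2 * ξ i * landauFlux γ i u (x, ξ)) := by
        rw [(hsqrtM.fun_mul (differentiable_landauFlux hγ hγ' i u (x, ξ)).hasFDerivAt).fderiv]
        simp [EuclideanSpace.inner_single_right]
        ring

lemma fderiv_landauFlux_apply (i : Fin 3) (u : PhaseSchwartz) (z m : E3 × E3) :
    fderiv ℝ (landauFlux γ i u) z m
      = ∑ j, (fderiv ℝ (fun z => landauConv γ i j (velMul sqrtM u) z * velDeriv j u z) z m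
        - fderiv ℝ (fun z => landauConv γ i j (velMul sqrtM (velDeriv j u)) z * u z) z m) := by
  have hdiff (j : Fin 3) (f g : PhaseSchwartz) :
      DifferentiableAt ℝ (fun z => landauConv γ i j f z * g z) z :=
    (differentiable_landauConv hγ hγ' i j f z).mul g.differentiableAt
  unfold landauFlux
  rw [fderiv_fun_sum fun j _ => (hdiff j _ _).fun_sub (hdiff j _ _), sum_apply]
  refine Finset.sum_congr rfl fun j _ => ?_
  rw [fderiv_fun_sub (hdiff j _ _) (hdiff j _ _), sub_apply]

-- The last three sums vanish after summation over `i`: the first by the symmetry of `B`, the other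
-- two by the kernel identity.
lemma fderiv_landauFlux_sub (i : Fin 3) (u : PhaseSchwartz) (z : E3 × E3) :
    fderiv ℝ (landauFlux γ i u) z (0, basisVec i) - 1 / 2 * z.2 i * landauFlux γ i u z
      = ∑ j, (landauConv γ i j (velMul sqrtM u) z * velDeriv i (velDeriv j u) z
          - landauConv γ i j (velMul sqrtM (velDeriv i (velDeriv j u))) z * u z
          - landauConv γ i j (velMul (fun ξ => ξ i * sqrtM ξ) u) z * velDeriv j u z
          + landauConv γ i j (velMul (fun ξ => ξ i * sqrtM ξ) (velDeriv j u)) z * u z)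
        + ∑ j, (landauConv γ i j (velMul sqrtM (velDeriv i u)) z * velDeriv j u z
          - landauConv γ i j (velMul sqrtM (velDeriv j u)) z * velDeriv i u z)
        + 1 / 2 * ∑ j, (landauConv γ i j (velMul (fun ξ => ξ i * sqrtM ξ) u) z
          - z.2 i * landauConv γ i j (velMul sqrtM u) z) * velDeriv j u z
        - 1 / 2 * ∑ j, (landauConv γ i j (velMul (fun ξ => ξ i * sqrtM ξ) (velDeriv j u)) z
          - z.2 i * landauConv γ i j (velMul sqrtM (velDeriv j u)) z) * u z := by
  have hvel (h : PhaseSchwartz) : dirDeriv (0, basisVec i) h = velDeriv i h := rfl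
  rw [fderiv_landauFlux_apply hγ hγ', landauFlux, Finset.mul_sum, Finset.mul_sum,
    Finset.mul_sum, ← Finset.sum_sub_distrib, ← Finset.sum_add_distrib, ← Finset.sum_add_distrib,
    ← Finset.sum_sub_distrib]
  refine Finset.sum_congr rfl fun j _ => ?_
  simp only [fderiv_landauConv_mul_apply hγ hγ', hvel, velDeriv_velMul_sqrtM,
    landauConv_sub hγ hγ', landauConv_smul]
  ring

lemma sum_sum_landauConv_coord_mul_sub (f g : Fin 3 → PhaseSchwartz) (z : E3 × E3) :
    ∑ i, ∑ j, (landauConv γ i j (velMul (fun ξ => ξ i * sqrtM ξ) (f j)) z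
      - z.2 i * landauConv γ i j (velMul sqrtM (f j)) z) * g j z = 0 := by
  rw [Finset.sum_comm]
  refine Finset.sum_eq_zero fun j _ => ?_
  simp only [← Finset.sum_mul, Finset.sum_sub_distrib, landauConv_comm γ _ j]
  rw [sum_landauConv_coord_mul hγ hγ' j hasTemperateGrowth_sqrtM, sub_self, zero_mul]

lemma Gam_uc (u : PhaseSchwartz) (x ξ : E3) :
    Gam γ (uc u x) (uc u x) ξ
      = ∑ i, ∑ j, (landauConv γ i j (velMul sqrtM u) (x, ξ) * velDeriv i (velDeriv j u) (x, ξ)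
        - landauConv γ i j (velMul sqrtM (velDeriv i (velDeriv j u))) (x, ξ) * u (x, ξ)
        - landauConv γ i j (velMul (fun ξ => ξ i * sqrtM ξ) u) (x, ξ) * velDeriv j u (x, ξ)
        + landauConv γ i j (velMul (fun ξ => ξ i * sqrtM ξ) (velDeriv j u)) (x, ξ) * u (x, ξ)) := by
  have huc : (fun ζ => sqrtM ζ * uc u x ζ) = uc (velMul sqrtM u) x := by
    ext ζ
    rw [uc, uc, velMul_apply hasTemperateGrowth_sqrtM]
  have hM : 0 < Mx ξ := by unfold Mx; positivity
  have hcancel : Mx ξ ^ (-(1 : ℝ) / 2) * sqrtM ξ = 1 := by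
    rw [sqrtM, sqrt_eq_rpow, ← rpow_add hM, neg_div, neg_add_cancel, rpow_zero]
  rw [Gam, huc, Qop_velMul_sqrtM hγ hγ', ← mul_assoc, hcancel, one_mul,
    Finset.sum_congr rfl fun i _ => fderiv_landauFlux_sub hγ hγ' i u (x, ξ),
    Finset.sum_sub_distrib, Finset.sum_add_distrib, Finset.sum_add_distrib,
    sum_sum_landauConv_antisymm, ← Finset.mul_sum, ← Finset.mul_sum,
    sum_sum_landauConv_coord_mul_sub hγ hγ' (fun _ => u) fun j => velDeriv j u,
    sum_sum_landauConv_coord_mul_sub hγ hγ' (fun j => velDeriv j u) fun _ => u,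
    mul_zero, add_zero, add_zero, sub_zero]

end

lemma sq_Bij_mul_le (γ : ℝ) (i j : Fin 3) {η ζ : E3} {c K : ℝ} (hc : |c| * (1 + ‖ζ‖) ^ 4 ≤ K) :
    (Bij γ i j η * c) ^ 2 ≤ (2 * K) ^ 2 * (‖η‖ ^ (-(-(2 * (γ + 2)))) * (1 + ‖ζ‖) ^ (-8 : ℝ)) := by
  have hη : ‖η‖ ^ (-(-(2 * (γ + 2)))) = (‖η‖ ^ (γ + 2)) ^ 2 := by
    rw [← rpow_mul_natCast (norm_nonneg η), neg_neg, mul_comm 2, Nat.cast_ofNat]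
  have hζ : (1 + ‖ζ‖) ^ (-8 : ℝ) = ((1 + ‖ζ‖) ^ (-4 : ℝ)) ^ 2 := by
    rw [← rpow_mul_natCast (by positivity)]
    norm_num
  have hdecay : |c| ≤ K * (1 + ‖ζ‖) ^ (-4 : ℝ) := by
    rw [rpow_neg (by positivity), ← div_eq_mul_inv, le_div_iff₀ (by positivity)]
    exact_mod_cast hc
  calc (Bij γ i j η * c) ^ 2 = (|Bij γ i j η| * |c|) ^ 2 := by rw [← abs_mul, sq_abs]
    _ ≤ (2 * ‖η‖ ^ (γ + 2) * (K * (1 + ‖ζ‖) ^ (-4 : ℝ))) ^ 2 := by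
        gcongr
        exact abs_Bij_le γ i j η
    _ = (2 * K) ^ 2 * (‖η‖ ^ (-(-(2 * (γ + 2)))) * (1 + ‖ζ‖) ^ (-8 : ℝ)) := by
        rw [hη, hζ]
        ring

lemma exists_eLpNorm_Bij_mul_le {γ : ℝ} (hγ : -7 / 2 < γ) (hγ' : γ ≤ -2) (i j : Fin 3)
    {g : E3 → ℝ} (hg : IsRapidMultiplier g) : ∃ C : ℝ≥0, ∀ ξ,
      eLpNorm (fun η => Bij γ i j (ξ - η) * g η) 2 volume
        ≤ C * ENNReal.ofReal (jap ξ ^ (γ + 2)) := by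
  obtain ⟨K, hK⟩ := hg.exists_decay 4
  obtain ⟨C, hC0, hC⟩ := exists_integral_norm_rpow_neg_mul_le (volume : Measure E3)
    (a := -(2 * (γ + 2))) (r := 8) (by linarith) (by simp; linarith) (by simp; linarith)
  have hK0 : 0 ≤ K := le_trans (by positivity) (hK 0)
  refine ⟨(2 * K * √C).toNNReal, fun ξ => ?_⟩
  rw [← ENNReal.pow_le_pow_left_iff two_ne_zero, eLpNorm_two_sq,
    ← lintegral_sub_left_eq_self _ ξ, ENNReal.ofNNReal_toNNReal,
    ← ENNReal.ofReal_mul (by positivity), ← ENNReal.ofReal_pow (by have := jap_pos ξ; positivity)]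
  calc ∫⁻ w, ‖Bij γ i j (ξ - (ξ - w)) * g (ξ - w)‖ₑ ^ 2
      ≤ ∫⁻ w, ENNReal.ofReal
          ((2 * K) ^ 2 * (‖w‖ ^ (-(-(2 * (γ + 2)))) * (1 + ‖ξ - w‖) ^ (-8 : ℝ))) := by
        refine lintegral_mono fun w => ?_
        rw [enorm_sq_eq_ofReal_sq, sub_sub_cancel]
        exact ENNReal.ofReal_le_ofReal (sq_Bij_mul_le γ i j (hK (ξ - w)))
    _ = ENNReal.ofReal (∫ w,
          (2 * K) ^ 2 * (‖w‖ ^ (-(-(2 * (γ + 2)))) * (1 + ‖ξ - w‖) ^ (-8 : ℝ))) :=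
        (ofReal_integral_eq_lintegral_ofReal ((hC ξ).1.const_mul _)
          (.of_forall fun w => by positivity)).symm
    _ ≤ ENNReal.ofReal ((2 * K * √C * jap ξ ^ (γ + 2)) ^ 2) := by
        have hjap : (1 + ‖ξ‖) ^ (-(-(2 * (γ + 2)))) ≤ (jap ξ ^ (γ + 2)) ^ 2 := by
          rw [← rpow_mul_natCast (jap_pos ξ).le, neg_neg, mul_comm 2]
          exact rpow_le_rpow_of_nonpos (jap_pos ξ) (jap_le_one_add_norm ξ)
            (by linarith)
        refine ENNReal.ofReal_le_ofReal ?_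
        rw [integral_const_mul, mul_pow (2 * K * √C), mul_pow (2 * K) √C, sq_sqrt hC0, mul_assoc]
        gcongr
        exact (hC ξ).2.trans (by gcongr)

lemma exists_enorm_landauConv_velMul_le {γ : ℝ} (hγ : -7 / 2 < γ) (hγ' : γ ≤ -2) (i j : Fin 3)
    {g : E3 → ℝ} (hg : IsRapidMultiplier g) : ∃ C : ℝ≥0, ∀ h x ξ,
      ‖jap ξ ^ (-(γ + 2)) * landauConv γ i j (velMul g h) (x, ξ)‖ₑ
        ≤ C * eLpNorm (uc h x) 2 volume := by
  obtain ⟨C, hC⟩ := exists_eLpNorm_Bij_mul_le hγ hγ' i j hg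
  refine ⟨C, fun h x ξ => ?_⟩
  have hgm : Measurable g := hg.hasTemperateGrowth.1.continuous.measurable
  have hjap : ‖jap ξ ^ (-(γ + 2))‖ₑ * ENNReal.ofReal (jap ξ ^ (γ + 2)) = 1 := by
    rw [Real.enorm_of_nonneg (rpow_nonneg (jap_pos ξ).le _),
      ← ENNReal.ofReal_mul (rpow_nonneg (jap_pos ξ).le _), ← rpow_add (jap_pos ξ),
      neg_add_cancel, rpow_zero, ENNReal.ofReal_one]
  have hconv : ‖landauConv γ i j (velMul g h) (x, ξ)‖ₑ
      ≤ C * ENNReal.ofReal (jap ξ ^ (γ + 2)) * eLpNorm (uc h x) 2 volume :=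
    calc ‖landauConv γ i j (velMul g h) (x, ξ)‖ₑ
        ≤ ∫⁻ η, ‖Bij γ i j (ξ - η) * g η‖ₑ * ‖uc h x η‖ₑ := by
          rw [landauConv_eq_integral]
          simpa only [velMul_apply hg.hasTemperateGrowth, ← mul_assoc, enorm_mul, uc] using
            enorm_integral_le_lintegral_enorm fun η => Bij γ i j (ξ - η) * velMul g h (x, η)
      _ ≤ eLpNorm (fun η => Bij γ i j (ξ - η) * g η) 2 volume * eLpNorm (uc h x) 2 volume := by
          refine (lintegral_mul_le_eLpNorm_two ?_ ?_).trans_eq (by simp only [eLpNorm_enorm])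
          · exact (((measurable_Bij γ i j).comp (by fun_prop)).mul hgm).enorm.aemeasurable
          · exact (h.continuous.comp (by fun_prop)).measurable.enorm.aemeasurable
      _ ≤ _ := by gcongr; exact hC ξ
  calc ‖jap ξ ^ (-(γ + 2)) * landauConv γ i j (velMul g h) (x, ξ)‖ₑ
      ≤ ‖jap ξ ^ (-(γ + 2))‖ₑ *
          (C * ENNReal.ofReal (jap ξ ^ (γ + 2)) * eLpNorm (uc h x) 2 volume) := by
        rw [enorm_mul]; gcongr
    _ = C * eLpNorm (uc h x) 2 volume := by
        rw [← mul_assoc, mul_left_comm, hjap, mul_one]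

end Landau

/-! ### The Poisson potential -/

section Potential

instance isAddHaarMeasure_volume_phaseSpace : (volume : Measure (E3 × E3)).IsAddHaarMeasure :=
  Measure.prod.instIsAddHaarMeasure _ _

lemma mul_poisson_eq_neg_integral {ρ : E3 → ℝ} (hρ : Integrable ρ) (hρ0 : ∫ y, ρ y = 0) {a : ℝ}
    {x : E3} (hint : Integrable fun y => ρ y * (‖x - y‖⁻¹ * (a - ‖x - y‖))) :
    4 * π * (a * poisson ρ x) = -∫ y, ρ y * (‖x - y‖⁻¹ * (a - ‖x - y‖)) := by
  have hne : ∀ᵐ y : E3, y ≠ x := by simp [ae_iff]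
  calc 4 * π * (a * poisson ρ x) = -∫ y, 4 * π * (a * (ρ y / (4 * π * ‖x - y‖))) := by
        rw [integral_const_mul, integral_const_mul, poisson]; ring
    _ = -∫ y, (ρ y * (‖x - y‖⁻¹ * (a - ‖x - y‖)) + ρ y) := by
        congr 1
        refine integral_congr_ae (hne.mono fun y hy => ?_)
        have : ‖x - y‖ ≠ 0 := norm_ne_zero_iff.2 (sub_ne_zero.2 hy.symm)
        field_simp
        ring
    _ = -∫ y, ρ y * (‖x - y‖⁻¹ * (a - ‖x - y‖)) := by
        rw [integral_add hint hρ, hρ0, add_zero]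

lemma abs_mul_inv_norm_sub_mul_le {c C r : ℝ} (x : E3) {y : E3}
    (hc : |c| ≤ C * (1 + ‖y‖) ^ (-r)) :
    |c * (‖x - y‖⁻¹ * (1 + ‖x‖ - ‖x - y‖))|
      ≤ C * (‖x - y‖ ^ (-1 : ℝ) * (1 + ‖y‖) ^ (-(r - 1))) := by
  have hnum : |1 + ‖x‖ - ‖x - y‖| ≤ 1 + ‖y‖ := by
    rw [abs_le]
    constructor <;> linarith [norm_sub_le x y, norm_sub_norm_le x y, norm_nonneg y]
  have hC := (abs_nonneg c).trans hc
  calc |c * (‖x - y‖⁻¹ * (1 + ‖x‖ - ‖x - y‖))|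
      = |c| * (‖x - y‖⁻¹ * |1 + ‖x‖ - ‖x - y‖|) := by simp [abs_mul]
    _ ≤ C * (1 + ‖y‖) ^ (-r) * (‖x - y‖⁻¹ * (1 + ‖y‖)) := by gcongr
    _ = C * (‖x - y‖ ^ (-1 : ℝ) * (1 + ‖y‖) ^ (-(r - 1))) := by
      rw [neg_sub, sub_eq_neg_add 1 r, rpow_add_one (by positivity), rpow_neg_one]
      ring

-- A zero mean lets one subtract `|x - y|` from the numerator of `(1 + |x|) / |x - y|`,
-- which leaves at most `1 + |y|` there and so gains one power of decay.
lemma exists_abs_poisson_le {ρ : E3 → ℝ} (hρm : AEStronglyMeasurable ρ) {C r : ℝ} (hr : 5 < r)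
    (hρ : ∀ y, |ρ y| ≤ C * (1 + ‖y‖) ^ (-r)) (hρ0 : ∫ y, ρ y = 0) :
    ∃ K, ∀ x, |poisson ρ x| ≤ K * (1 + ‖x‖) ^ (-2 : ℝ) := by
  obtain ⟨D, -, hD⟩ := exists_integral_norm_rpow_neg_mul_le (volume : Measure E3) (a := 1)
    (r := r - 1) zero_le_one (by simp) (by simp; linarith)
  have hC : 0 ≤ C := by simpa using (abs_nonneg _).trans (hρ 0)
  have hρint : Integrable ρ :=
    ((integrable_one_add_norm (by simp; linarith)).const_mul C).mono' hρm (.of_forall hρ)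
  refine ⟨C * D, fun x => ?_⟩
  set q : E3 → ℝ := fun y => ρ y * (‖x - y‖⁻¹ * (1 + ‖x‖ - ‖x - y‖))
  set M : E3 → ℝ := fun y => C * (‖x - y‖ ^ (-1 : ℝ) * (1 + ‖y‖) ^ (-(r - 1)))
  have hM : Integrable M := by
    simpa only [sub_sub_cancel] using ((hD x).1.comp_sub_left x).const_mul C
  have hM_le : ∫ y, M y ≤ C * D * (1 + ‖x‖)⁻¹ := by
    rw [← integral_sub_left_eq_self M volume x, integral_const_mul, mul_assoc, ← rpow_neg_one]
    simpa only [sub_sub_cancel] using mul_le_mul_of_nonneg_left (hD x).2 hC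
  have hqM (y : E3) : ‖q y‖ ≤ M y := abs_mul_inv_norm_sub_mul_le x (hρ y)
  have hq : Integrable q :=
    hM.mono' (hρm.mul (Measurable.aestronglyMeasurable (by fun_prop))) (.of_forall hqM)
  have hkey : 4 * π * ((1 + ‖x‖) * |poisson ρ x|) ≤ C * D * (1 + ‖x‖)⁻¹ := by
    calc 4 * π * ((1 + ‖x‖) * |poisson ρ x|) = ‖4 * π * ((1 + ‖x‖) * poisson ρ x)‖ := by
          rw [norm_mul, norm_mul (1 + ‖x‖), norm_of_nonneg (by positivity),
            norm_of_nonneg (by positivity), norm_eq_abs]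
      _ = ‖∫ y, q y‖ := by rw [mul_poisson_eq_neg_integral hρint hρ0 hq, norm_neg]
      _ ≤ C * D * (1 + ‖x‖)⁻¹ := (norm_integral_le_of_norm_le hM (.of_forall hqM)).trans hM_le
  have hdrop : (1 + ‖x‖) * |poisson ρ x| ≤ C * D * (1 + ‖x‖)⁻¹ :=
    (le_mul_of_one_le_left (by positivity) (by linarith [pi_gt_three])).trans hkey
  rw [rpow_neg (by positivity), ← div_eq_mul_inv, le_div_iff₀ (by positivity), rpow_two]
  rw [← div_eq_mul_inv, le_div_iff₀ (by positivity)] at hdrop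
  linarith

lemma integral_dirDeriv (m : E3 × E3) (h : PhaseSchwartz) : ∫ z, dirDeriv m h z = 0 := by
  have hint : Integrable fun z => fderiv ℝ h z m :=
    (dirDeriv m h).integrable.congr (.of_forall (dirDeriv_apply m h))
  simp only [dirDeriv_apply]
  simpa using integral_mul_fderiv_eq_neg_fderiv_mul_of_integrable (f := fun _ => (1 : ℝ)) (g := h)
    (v := m) (μ := volume) (by simp) (by simpa using hint) (by simpa using h.integrable)
    (fun _ _ => by fun_prop) (fun _ _ => h.differentiableAt)

/-- The Poisson potential of the density `x ↦ ∫ h(x,ξ) dξ`. -/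
def potential (h : PhaseSchwartz) : E3 → ℝ := poisson fun x => ∫ ξ, h (x, ξ)

lemma phiF_uc (u : PhaseSchwartz) : phiF (uc u) = potential (velMul sqrtM u) := by
  simp only [potential, phiF, velMul_apply hasTemperateGrowth_sqrtM]
  rfl

/-- The Newton kernel on phase space, constant in the velocity variable. -/
def newtonKernel (w : E3 × E3) : ℝ := -(4 * π * ‖w.1‖)⁻¹

lemma abs_newtonKernel_le (w : E3 × E3) : |newtonKernel w| ≤ ‖w.1‖ ^ (-1 : ℝ) := by
  rw [newtonKernel, abs_neg, abs_of_nonneg (by positivity), mul_inv, rpow_neg_one]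
  exact mul_le_of_le_one_left (by positivity) (inv_le_one_of_one_le₀ (by linarith [pi_gt_three]))

lemma one_add_norm_prod_rpow_neg_le {r s : ℝ} (hr : 0 ≤ r) (hs : 0 ≤ s) (x ξ : E3) :
    (1 + ‖(x, ξ)‖) ^ (-(r + s)) ≤ (1 + ‖x‖) ^ (-r) * (1 + ‖ξ‖) ^ (-s) := by
  rw [neg_add, rpow_add (by positivity)]
  exact mul_le_mul
    (rpow_le_rpow_of_nonpos (by positivity) (by gcongr; exact norm_fst_le (x, ξ)) (by linarith))
    (rpow_le_rpow_of_nonpos (by positivity) (by gcongr; exact norm_snd_le (x, ξ)) (by linarith))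
    (by positivity) (by positivity)

lemma isTemperedKernel_newtonKernel :
    IsTemperedKernel newtonKernel (ContinuousLinearMap.id ℝ (E3 × E3)) where
  aestronglyMeasurable := Measurable.aestronglyMeasurable (by unfold newtonKernel; fun_prop)
  exists_integrable := by
    obtain ⟨C, -, h⟩ := exists_integral_norm_rpow_neg_mul_le (volume : Measure E3)
      (a := 1) (r := 5) zero_le_one (by simp) (by simp; norm_num)
    have hvel : Integrable fun ξ : E3 => (1 + ‖ξ‖) ^ (-4 : ℝ) :=
      integrable_one_add_norm (by simp; norm_num)
    refine ⟨5 + 4, by norm_num, ((h 0).1.mul_prod hvel).mono' ?_ (.of_forall fun w => ?_)⟩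
    · exact Measurable.aestronglyMeasurable (by unfold newtonKernel; fun_prop)
    · rw [norm_mul, norm_eq_abs, norm_of_nonneg (by positivity), zero_sub, norm_neg, mul_assoc]
      exact mul_le_mul (abs_newtonKernel_le w)
        (one_add_norm_prod_rpow_neg_le (by norm_num) (by norm_num) w.1 w.2)
        (by positivity) (by positivity)

lemma potential_eq_kernelConv (h : PhaseSchwartz) (x : E3) :
    potential h x = kernelConv newtonKernel (ContinuousLinearMap.id ℝ (E3 × E3)) h (x, 0) := by
  have hint := isTemperedKernel_newtonKernel.integrable_smul h (x, 0)
  rw [potential, poisson, kernelConv]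
  rw [Measure.volume_eq_prod] at hint ⊢
  rw [integral_prod _ hint, ← integral_neg, ← integral_sub_left_eq_self _ volume x]
  congr 1 with a
  rw [← integral_neg_eq_self (fun ξ => h (x - a, ξ)), sub_sub_cancel]
  simp [newtonKernel, integral_const_mul, integral_neg, div_eq_inv_mul]

lemma hasFDerivAt_potential (h : PhaseSchwartz) (x : E3) :
    HasFDerivAt (potential h)
      ((fderiv ℝ (kernelConv newtonKernel (ContinuousLinearMap.id ℝ (E3 × E3)) h) (x, 0)).comp
        (ContinuousLinearMap.inl ℝ E3 E3)) x := by
  rw [funext (potential_eq_kernelConv h)]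
  exact HasFDerivAt.comp (g := kernelConv newtonKernel (.id ℝ (E3 × E3)) h) x
    (isTemperedKernel_newtonKernel.differentiable_kernelConv h (x, 0)).hasFDerivAt
    (hasFDerivAt_prodMk_left (𝕜 := ℝ) x (0 : E3))

lemma pd_potential (i : Fin 3) (h : PhaseSchwartz) :
    pd i (potential h) = potential (spaceDeriv i h) := by
  ext x
  rw [pd, (hasFDerivAt_potential h x).fderiv, potential_eq_kernelConv]
  exact isTemperedKernel_newtonKernel.fderiv_kernelConv_apply h (x, 0) (basisVec i, 0)

lemma contDiff_potential (h : PhaseSchwartz) (n : ℕ) : ContDiff ℝ n (potential h) := by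
  rw [funext (potential_eq_kernelConv h)]
  exact (isTemperedKernel_newtonKernel.contDiff_kernelConv h n).comp (by fun_prop)

lemma pdM_potential (α : MIdx) (h : PhaseSchwartz) :
    pdM α (potential h) = potential (multiPow spaceDeriv α h) :=
  pdM_eq_multiPow pd_potential α h

lemma memLp_two_potential_dirDeriv (m : E3 × E3) (h : PhaseSchwartz) :
    MemLp (potential (dirDeriv m h)) 2 := by
  set g := dirDeriv m h
  obtain ⟨C, hC, hg⟩ := schwartzMap_norm_le_one_add_norm_rpow_neg g (6 + 4)
  have hvel : Integrable fun ξ : E3 => (1 + ‖ξ‖) ^ (-4 : ℝ) :=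
    integrable_one_add_norm (by simp; norm_num)
  have hdecay (y : E3) : |∫ ξ, g (y, ξ)|
      ≤ C * (∫ ξ : E3, (1 + ‖ξ‖) ^ (-4 : ℝ)) * (1 + ‖y‖) ^ (-6 : ℝ) := by
    have hle (ξ : E3) : ‖g (y, ξ)‖ ≤ C * (1 + ‖y‖) ^ (-6 : ℝ) * (1 + ‖ξ‖) ^ (-4 : ℝ) := by
      refine (hg (y, ξ)).trans ?_
      rw [mul_assoc]
      gcongr
      exact one_add_norm_prod_rpow_neg_le (by norm_num) (by norm_num) y ξ
    refine (norm_integral_le_of_norm_le (hvel.const_mul _) (.of_forall hle)).trans_eq ?_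
    rw [integral_const_mul]; ring
  have hzero : ∫ y, ∫ ξ, g (y, ξ) = 0 := by
    rw [← integral_prod _ (Measure.volume_eq_prod E3 E3 ▸ g.integrable)]
    exact integral_dirDeriv m h
  obtain ⟨K, hK⟩ := exists_abs_poisson_le
    (AEStronglyMeasurable.integral_prod_right' g.continuous.aestronglyMeasurable)
    (by norm_num) hdecay hzero
  have hcont : Continuous (potential g) := (contDiff_potential g 0).continuous
  refine (memLp_two_iff_integrable_sq hcont.aestronglyMeasurable).2 ?_
  refine ((integrable_one_add_norm (E := E3) (r := 4) (by simp; norm_num)).const_mul (K ^ 2)).mono'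
    (hcont.pow 2).aestronglyMeasurable (.of_forall fun x => ?_)
  calc ‖potential g x ^ 2‖ = |potential g x| ^ 2 := by simp
    _ ≤ (K * (1 + ‖x‖) ^ (-2 : ℝ)) ^ 2 := by gcongr; exact hK x
    _ = K ^ 2 * (1 + ‖x‖) ^ (-4 : ℝ) := by
      rw [mul_pow, ← rpow_mul_natCast (by positivity)]; norm_num

end Potential

/-! ### The energy controls weighted derivatives -/

section Energy

lemma eLpNorm_two_eq_ofReal_sqrt {α : Type*} [MeasurableSpace α] {μ : Measure α} {f : α → ℝ}
    (hf : MemLp f 2 μ) : eLpNorm f 2 μ = ENNReal.ofReal √(∫ x, f x ^ 2 ∂μ) := by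
  rw [hf.eLpNorm_eq_integral_rpow_norm two_ne_zero ENNReal.ofNat_ne_top, sqrt_eq_rpow]
  norm_num

lemma measurable_uncurry_uc (k : PhaseSchwartz) : Measurable (Function.uncurry (uc k)) :=
  k.continuous.measurable

lemma mixedNorm_two_uc (k : PhaseSchwartz) :
    mixedNorm volume volume 2 (uc k) = ENNReal.ofReal √(∫ x, ∫ ξ, k (x, ξ) ^ 2) := by
  have hk : MemLp k 2 (volume.prod volume) := Measure.volume_eq_prod E3 E3 ▸ k.memLp 2 volume
  rw [← integral_prod _ hk.integrable_sq, ← eLpNorm_two_eq_ofReal_sqrt hk,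
    mixedNorm_two_eq (measurable_uncurry_uc k),
    ← (ENNReal.pow_right_strictMono two_ne_zero).injective.eq_iff]
  simp only [eLpNorm_two_sq, enorm_eq_self]
  exact (lintegral_prod _ (k.continuous.measurable.enorm.pow_const 2).aemeasurable).symm

/-- Multiplication by `⟨ξ⟩^r`. -/
def japMul (r : ℝ) : Module.End ℝ PhaseSchwartz := velMul fun ξ => jap ξ ^ r

lemma japMul_apply (r : ℝ) (h : PhaseSchwartz) (z : E3 × E3) :
    japMul r h z = jap z.2 ^ r * h z :=
  velMul_apply (hasTemperateGrowth_jap_rpow r) h z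

lemma mixedNorm_japMul_mono (p : ℝ≥0∞) {r s : ℝ} (hrs : r ≤ s) (h : PhaseSchwartz) :
    mixedNorm volume volume p (uc (japMul r h)) ≤ mixedNorm volume volume p (uc (japMul s h)) := by
  refine eLpNorm_mono_enorm fun ξ => ?_
  simp only [enorm_eq_self]
  refine eLpNorm_mono fun x => ?_
  simp only [uc, japMul_apply, norm_mul, norm_of_nonneg (rpow_nonneg (jap_pos ξ).le _)]
  gcongr
  exact one_le_jap ξ

lemma commute_velMul_spaceDeriv {g : E3 → ℝ} (hg : g.HasTemperateGrowth) (i : Fin 3) :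
    Commute (velMul g) (spaceDeriv i) :=
  LinearMap.ext fun h => (spaceDeriv_velMul hg i h).symm

lemma le_three_mul_of_sq_le_sum_cubeIdx {a E : ℝ≥0∞} {b : MIdx → ℝ≥0∞}
    (ha : a ^ 2 ≤ ∑ p ∈ cubeIdx, b p ^ 2) (hb : ∀ p, deg p ≤ 3 → b p ≤ E) : a ≤ 3 * E := by
  rw [← ENNReal.pow_le_pow_left_iff two_ne_zero]
  calc a ^ 2 ≤ ∑ _p ∈ cubeIdx, E ^ 2 := ha.trans <| Finset.sum_le_sum fun p hp => by
        gcongr; exact hb p (deg_le_three_of_mem_cubeIdx hp)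
    _ = 8 * E ^ 2 := by simp [cubeIdx]
    _ ≤ 9 * E ^ 2 := by gcongr; norm_num
    _ = (3 * E) ^ 2 := by rw [mul_pow]; norm_num

lemma eLpNorm_two_uc_sq_le_sum (k : PhaseSchwartz) (x : E3) :
    eLpNorm (uc k x) 2 volume ^ 2
      ≤ ∑ p ∈ cubeIdx, mixedNorm volume volume 2 (uc (multiPow spaceDeriv p k)) ^ 2 := by
  have hslice (ξ : E3) : ‖k (x, ξ)‖ₑ ^ 2
      ≤ ∑ p ∈ cubeIdx, eLpNorm (fun y => uc (multiPow spaceDeriv p k) y ξ) 2 volume ^ 2 := by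
    refine (enorm_sq_le_sum_lintegral_pdM (f := fun y => k (y, ξ))
      ((k.smooth 3).comp (by fun_prop)) x).trans_eq (Finset.sum_congr rfl fun p _ => ?_)
    rw [eLpNorm_two_sq, pdM_eq_multiPow (T := fun h y => h (y, ξ)) fun i h =>
      congrArg (fun f y => f y ξ) (pdx_uc i h)]
    rfl
  calc eLpNorm (uc k x) 2 volume ^ 2
      ≤ ∫⁻ ξ, ∑ p ∈ cubeIdx, eLpNorm (fun y => uc (multiPow spaceDeriv p k) y ξ) 2 volume ^ 2 :=
        (eLpNorm_two_sq _ _).trans_le (lintegral_mono hslice)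
    _ = _ := by
      rw [lintegral_finsetSum _ fun p _ =>
        (measurable_eLpNorm_left (measurable_uncurry_uc _) ENNReal.ofNat_ne_top).pow_const 2]
      simp only [mixedNorm, eLpNorm_two_sq (fun _ => eLpNorm _ 2 volume), enorm_eq_self]

lemma xnormSq_nonneg (γ τ lam ϑ t : ℝ) (u : E3 → E3 → ℝ) : 0 ≤ xnormSq γ τ lam ϑ t u :=
  integral_nonneg fun _ => integral_nonneg fun _ => by positivity

lemma L2Sq_nonneg (f : E3 → ℝ) : 0 ≤ L2Sq f := integral_nonneg fun _ => sq_nonneg _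

lemma HsobSq_nonneg (N : ℕ) (f : E3 → ℝ) : 0 ≤ HsobSq N f :=
  Finset.sum_nonneg fun _ _ => L2Sq_nonneg _

lemma gradSobSq_nonneg (N : ℕ) (f : E3 → ℝ) : 0 ≤ gradSobSq N f :=
  Finset.sum_nonneg fun _ _ => HsobSq_nonneg N _

variable {γ : ℝ} {N : ℕ} {ℓ lam ϑ t : ℝ}

lemma triSq_nonneg (u : E3 → E3 → ℝ) : 0 ≤ triSq γ N ℓ lam ϑ t u :=
  add_nonneg (Finset.sum_nonneg fun _ _ => xnormSq_nonneg _ _ _ _ _ _) (gradSobSq_nonneg _ _)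

lemma xnormSq_pdab_le_triSq {α β : MIdx} (h : deg α + deg β ≤ N) (u : E3 → E3 → ℝ) :
    xnormSq γ (deg β - ℓ) lam ϑ t (pdab α β u) ≤ triSq γ N ℓ lam ϑ t u :=
  (Finset.single_le_sum (f := fun p : MIdx × MIdx =>
      xnormSq γ (deg p.2 - ℓ) lam ϑ t (pdab p.1 p.2 u))
    (fun _ _ => xnormSq_nonneg _ _ _ _ _ _) (mem_midxP.2 h)).trans
      (le_add_of_nonneg_right (gradSobSq_nonneg _ _))

lemma L2Sq_pdM_pd_phiF_le_triSq {α : MIdx} (h : deg α ≤ N) (i : Fin 3) (u : E3 → E3 → ℝ) :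
    L2Sq (pdM α (pd i (phiF u))) ≤ triSq γ N ℓ lam ϑ t u :=
  calc L2Sq (pdM α (pd i (phiF u))) ≤ HsobSq N (pd i (phiF u)) :=
        Finset.single_le_sum (f := fun α => L2Sq (pdM α (pd i (phiF u))))
          (fun _ _ => L2Sq_nonneg _) (mem_midx.2 h)
    _ ≤ gradSobSq N (phiF u) :=
        Finset.single_le_sum (f := fun i => HsobSq N (pd i (phiF u)))
          (fun _ _ => HsobSq_nonneg _ _) (Finset.mem_univ i)
    _ ≤ triSq γ N ℓ lam ϑ t u :=
        le_add_of_nonneg_left (Finset.sum_nonneg fun _ _ => xnormSq_nonneg _ _ _ _ _ _)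

variable (γ N ℓ) in
/-- The square root of the energy functional `|||u|||²_{N,ℓ}`, as an extended nonnegative real. -/
def energyNorm (u : PhaseSchwartz) : ℝ≥0∞ := ENNReal.ofReal √(triSq γ N ℓ 0 1 0 (uc u))

lemma energyNorm_sq (u : PhaseSchwartz) :
    energyNorm γ N ℓ u ^ 2 = ENNReal.ofReal (triSq γ N ℓ 0 1 0 (uc u)) := by
  rw [energyNorm, ← ENNReal.ofReal_pow (sqrt_nonneg _), sq_sqrt (triSq_nonneg _)]

lemma xnormSq_uc (τ : ℝ) (h : PhaseSchwartz) :
    xnormSq γ τ 0 1 0 (uc h) = ∫ x, ∫ ξ, japMul ((γ + 2) * τ) h (x, ξ) ^ 2 := by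
  simp only [japMul_apply, mul_pow, xnormSq, vnormSq, wt, uc, zero_mul, zero_div, exp_zero, mul_one]

variable {a b : ℕ} {P : Module.End ℝ PhaseSchwartz}

lemma mixedNorm_two_japMul_le_energyNorm (hP : IsMixedDeriv a b P) (hab : a + b ≤ N) {τ : ℝ}
    (hτ : τ ≤ (γ + 2) * (b - ℓ)) (u : PhaseSchwartz) :
    mixedNorm volume volume 2 (uc (japMul τ (P u))) ≤ energyNorm γ N ℓ u := by
  refine (mixedNorm_japMul_mono 2 hτ _).trans ?_
  obtain ⟨α, β, rfl, rfl, rfl⟩ := hP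
  rw [mixedNorm_two_uc, ← xnormSq_uc, ← pdab_uc]
  exact ENNReal.ofReal_le_ofReal (sqrt_le_sqrt (xnormSq_pdab_le_triSq hab _))

lemma eLpNorm_two_japMul_le_energyNorm (hP : IsMixedDeriv a b P) (hab : a + b + 3 ≤ N) {τ : ℝ}
    (hτ : τ ≤ (γ + 2) * (b - ℓ)) (u : PhaseSchwartz) (x : E3) :
    eLpNorm (uc (japMul τ (P u)) x) 2 volume ≤ 3 * energyNorm γ N ℓ u := by
  refine le_three_mul_of_sq_le_sum_cubeIdx (eLpNorm_two_uc_sq_le_sum _ x) fun p hp => ?_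
  have hcomm : multiPow spaceDeriv p * japMul τ = japMul τ * multiPow spaceDeriv p :=
    (commute_multiPow_right
      (commute_velMul_spaceDeriv (hasTemperateGrowth_jap_rpow τ)) p).symm.eq
  rw [show multiPow spaceDeriv p (japMul τ (P u)) = japMul τ ((multiPow spaceDeriv p * P) u) from
    LinearMap.congr_fun hcomm (P u)]
  exact mixedNorm_two_japMul_le_energyNorm ((IsMixedDeriv.space p).mul hP) (by omega)
    (by simpa using hτ) u

/-- `h ↦ ∂_{x_i} (M^{1/2} h)`, whose potential is `∂_{x_i}` of the Poisson potential of `h`. -/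
def fieldSource (i : Fin 3) : Module.End ℝ PhaseSchwartz := spaceDeriv i * velMul sqrtM

lemma pd_phiF_uc (i : Fin 3) (u : PhaseSchwartz) :
    pd i (phiF (uc u)) = potential (fieldSource i u) := by
  rw [phiF_uc, pd_potential]; rfl

lemma commute_fieldSource_spaceDeriv (i j : Fin 3) : Commute (fieldSource i) (spaceDeriv j) :=
  (commute_dirDeriv _ _).mul_left (commute_velMul_spaceDeriv hasTemperateGrowth_sqrtM j)

lemma pdM_potential_fieldSource (α : MIdx) (i : Fin 3) (u : PhaseSchwartz) :
    pdM α (potential (fieldSource i u)) = potential (fieldSource i (multiPow spaceDeriv α u)) := by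
  rw [pdM_potential]
  exact congrArg potential (LinearMap.congr_fun
    (commute_multiPow_right (commute_fieldSource_spaceDeriv i) α).symm.eq u)

lemma eLpNorm_two_potential_le_energyNorm (hP : IsMixedDeriv a 0 P) (ha : a ≤ N) (i : Fin 3)
    (u : PhaseSchwartz) :
    eLpNorm (potential (fieldSource i (P u))) 2 volume ≤ energyNorm γ N ℓ u := by
  obtain ⟨α, rfl, rfl⟩ := hP.exists_eq_multiPow_spaceDeriv
  have hmem : MemLp (potential (fieldSource i (multiPow spaceDeriv α u))) 2 :=
    memLp_two_potential_dirDeriv _ _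
  rw [eLpNorm_two_eq_ofReal_sqrt hmem, ← pdM_potential_fieldSource, ← pd_phiF_uc]
  exact ENNReal.ofReal_le_ofReal (sqrt_le_sqrt (L2Sq_pdM_pd_phiF_le_triSq ha i _))

lemma enorm_potential_le_energyNorm (hP : IsMixedDeriv a 0 P) (ha : a + 3 ≤ N) (i : Fin 3)
    (u : PhaseSchwartz) (x : E3) :
    ‖potential (fieldSource i (P u)) x‖ₑ ≤ 3 * energyNorm γ N ℓ u := by
  refine le_three_mul_of_sq_le_sum_cubeIdx
    (b := fun p => eLpNorm (potential (fieldSource i ((multiPow spaceDeriv p * P) u))) 2 volume)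
    ?_ fun p hp => ?_
  · refine (enorm_sq_le_sum_lintegral_pdM (contDiff_potential _ 3) x).trans_eq ?_
    simp only [eLpNorm_two_sq, pdM_potential_fieldSource, Module.End.mul_apply]
  · exact eLpNorm_two_potential_le_energyNorm ((IsMixedDeriv.space p).mul hP) (by omega) i u

end Energy

/-! ### Quadratic expressions bounded by the energy -/

section QuadraticBound

lemma pdx_add {F G : E3 → E3 → ℝ} (hF : ∀ ξ, Differentiable ℝ fun x => F x ξ)
    (hG : ∀ ξ, Differentiable ℝ fun x => G x ξ) (k : Fin 3) :
    pdx k (fun x ξ => F x ξ + G x ξ) = fun x ξ => pdx k F x ξ + pdx k G x ξ := by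
  funext x ξ
  exact DFunLike.congr_fun (fderiv_fun_add (hF ξ x) (hG ξ x)) _

lemma pdx_const_mul {F : E3 → E3 → ℝ} (hF : ∀ ξ, Differentiable ℝ fun x => F x ξ) (c : ℝ)
    (k : Fin 3) : pdx k (fun x ξ => c * F x ξ) = fun x ξ => c * pdx k F x ξ := by
  funext x ξ
  exact DFunLike.congr_fun (fderiv_const_mul (hF ξ x) c) _

lemma pdx_mul {F G : E3 → E3 → ℝ} (hF : ∀ ξ, Differentiable ℝ fun x => F x ξ)
    (hG : ∀ ξ, Differentiable ℝ fun x => G x ξ) (k : Fin 3) :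
    pdx k (fun x ξ => F x ξ * G x ξ) = fun x ξ => pdx k F x ξ * G x ξ + F x ξ * pdx k G x ξ := by
  funext x ξ
  rw [pdx, fderiv_fun_mul (hF ξ x) (hG ξ x)]
  simp only [pdx, add_apply, smul_apply, smul_eq_mul]
  ring

variable {ι : Type*} {E : ι → ℝ≥0∞} {σ : ℝ} {p : ℝ≥0∞} {N n₁ n₂ : ℕ} {Φ Θ : ι → E3 → E3 → ℝ}

/-- `⟨ξ⟩^σ Φ(u)` is bounded in `L²_ξ(L^p_x)` by a constant times `E(u)²`. -/
structure IsQuadBounded (E : ι → ℝ≥0∞) (σ : ℝ) (p : ℝ≥0∞) (Φ : ι → E3 → E3 → ℝ) : Prop where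
  measurable : ∀ u, Measurable (Function.uncurry (Φ u))
  exists_le : ∃ C : ℝ≥0, ∀ u,
    mixedNorm volume volume p (fun x ξ => jap ξ ^ σ * Φ u x ξ) ≤ C * E u ^ 2

lemma measurable_uncurry_jap_rpow_mul (σ : ℝ) {f : E3 → E3 → ℝ}
    (hf : Measurable (Function.uncurry f)) :
    Measurable (Function.uncurry fun x ξ => jap ξ ^ σ * f x ξ) :=
  ((hasTemperateGrowth_jap_rpow σ).1.continuous.measurable.comp measurable_snd).mul hf

namespace IsQuadBounded

lemma add (hp1 : 1 ≤ p) (hp : p ≠ ⊤) (hΦ : IsQuadBounded E σ p Φ) (hΘ : IsQuadBounded E σ p Θ) :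
    IsQuadBounded E σ p fun u x ξ => Φ u x ξ + Θ u x ξ := by
  obtain ⟨C, hC⟩ := hΦ.exists_le
  obtain ⟨D, hD⟩ := hΘ.exists_le
  refine ⟨fun u => (hΦ.measurable u).add (hΘ.measurable u), C + D, fun u => ?_⟩
  simp only [mul_add]
  rw [ENNReal.coe_add, add_mul]
  exact (mixedNorm_add_le hp1 hp (measurable_uncurry_jap_rpow_mul σ (hΦ.measurable u))
    (measurable_uncurry_jap_rpow_mul σ (hΘ.measurable u))).trans (add_le_add (hC u) (hD u))

lemma const_mul (c : ℝ) (hΦ : IsQuadBounded E σ p Φ) :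
    IsQuadBounded E σ p fun u x ξ => c * Φ u x ξ := by
  obtain ⟨C, hC⟩ := hΦ.exists_le
  refine ⟨fun u => (hΦ.measurable u).const_mul c, ‖c‖₊ * C, fun u => ?_⟩
  simp only [mul_left_comm _ c]
  refine (mixedNorm_const_mul_le p c _).trans ?_
  rw [ENNReal.coe_mul, mul_assoc]
  exact mul_le_mul_right (hC u) _

end IsQuadBounded

/-- The bounds asked of the terms of the source: `⟨ξ⟩^σ Φ(u)` in `Z₁`, and `⟨ξ⟩^σ Φ(u)` with its
first space derivatives in `L²_{x,ξ}`, are bounded by a constant times `E(u)²`. -/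
structure IsQuadSource (E : ι → ℝ≥0∞) (σ : ℝ) (Φ : ι → E3 → E3 → ℝ) : Prop where
  differentiable : ∀ u ξ, Differentiable ℝ fun x => Φ u x ξ
  one : IsQuadBounded E σ 1 Φ
  two : IsQuadBounded E σ 2 Φ
  two_pdx : ∀ k, IsQuadBounded E σ 2 fun u => pdx k (Φ u)

namespace IsQuadSource

lemma add (hΦ : IsQuadSource E σ Φ) (hΘ : IsQuadSource E σ Θ) :
    IsQuadSource E σ fun u x ξ => Φ u x ξ + Θ u x ξ where
  differentiable u ξ := (hΦ.differentiable u ξ).fun_add (hΘ.differentiable u ξ)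
  one := hΦ.one.add le_rfl ENNReal.one_ne_top hΘ.one
  two := hΦ.two.add one_le_two ENNReal.ofNat_ne_top hΘ.two
  two_pdx k := by
    simp only [pdx_add (hΦ.differentiable _) (hΘ.differentiable _)]
    exact (hΦ.two_pdx k).add one_le_two ENNReal.ofNat_ne_top (hΘ.two_pdx k)

lemma const_mul (c : ℝ) (hΦ : IsQuadSource E σ Φ) :
    IsQuadSource E σ fun u x ξ => c * Φ u x ξ where
  differentiable u ξ := (hΦ.differentiable u ξ).const_mul c
  one := hΦ.one.const_mul c
  two := hΦ.two.const_mul c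
  two_pdx k := by
    simp only [pdx_const_mul (hΦ.differentiable _)]
    exact (hΦ.two_pdx k).const_mul c

lemma sub (hΦ : IsQuadSource E σ Φ) (hΘ : IsQuadSource E σ Θ) :
    IsQuadSource E σ fun u x ξ => Φ u x ξ - Θ u x ξ := by
  simpa only [neg_one_mul, ← sub_eq_add_neg] using hΦ.add (hΘ.const_mul (-1))

lemma sum_fin_three {Φ : Fin 3 → ι → E3 → E3 → ℝ} (hΦ : ∀ i, IsQuadSource E σ (Φ i)) :
    IsQuadSource E σ fun u x ξ => ∑ i, Φ i u x ξ := by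
  simp only [Fin.sum_univ_three]
  exact ((hΦ 0).add (hΦ 1)).add (hΦ 2)

lemma pdxM (hΦ : IsQuadSource E σ Φ) {α : MIdx} (hα : α ∈ midx 1) :
    IsQuadBounded E σ 2 fun u => pdxM α (Φ u) := by
  rcases eq_zero_or_unitIdx_of_mem_midx_one hα with rfl | ⟨k, rfl⟩
  · exact hΦ.two
  · fin_cases k
    exacts [hΦ.two_pdx 0, hΦ.two_pdx 1, hΦ.two_pdx 2]

end IsQuadSource

/-- The functions `a u` of the position, built from `n` derivatives of `u`, are bounded by a
constant times `E(u)`, in `L²` if the energy controls `n` derivatives and uniformly if it controls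
three more. -/
structure IsSobolevControlled (E : ι → ℝ≥0∞) (N n : ℕ) (a : ι → E3 → ℝ≥0∞) : Prop where
  measurable : ∀ u, Measurable (a u)
  exists_eLpNorm_le : n ≤ N → ∃ K : ℝ≥0, ∀ u, eLpNorm (a u) 2 volume ≤ K * E u
  exists_le : n + 3 ≤ N → ∃ K : ℝ≥0, ∀ u x, a u x ≤ K * E u

lemma IsSobolevControlled.const_mul {a : ι → E3 → ℝ≥0∞} (ha : IsSobolevControlled E N n₁ a)
    (C : ℝ≥0) : IsSobolevControlled E N n₁ fun u x => C * a u x where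
  measurable u := (ha.measurable u).const_mul _
  exists_eLpNorm_le hn := by
    obtain ⟨K, hK⟩ := ha.exists_eLpNorm_le hn
    refine ⟨C * K, fun u => ?_⟩
    rw [ENNReal.coe_mul, mul_assoc]
    exact (eLpNorm_le_mul_eLpNorm_of_ae_le_mul' (.of_forall fun x => le_rfl) 2).trans
      (mul_le_mul_right (hK u) _)
  exists_le hn := by
    obtain ⟨K, hK⟩ := ha.exists_le hn
    refine ⟨C * K, fun u x => ?_⟩
    rw [ENNReal.coe_mul, mul_assoc]
    exact mul_le_mul_right (hK u x) _

section Product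

variable {a : ι → E3 → ℝ≥0∞} {g : ι → E3 → E3 → ℝ}
  (hΦ : ∀ u, Measurable (Function.uncurry (Φ u))) (hg : ∀ u, Measurable (Function.uncurry (g u)))
  (ha : IsSobolevControlled E N n₁ a)
  (hgE : IsSobolevControlled E N n₂ fun u x => eLpNorm (g u x) 2 volume)
  (hle : ∀ u x ξ, ‖jap ξ ^ σ * Φ u x ξ‖ₑ ≤ a u x * ‖g u x ξ‖ₑ)

lemma exists_le_mul_sq {F A B : ι → ℝ≥0∞} (hF : ∀ u, F u ≤ A u * B u)
    (hA : ∃ K : ℝ≥0, ∀ u, A u ≤ K * E u) (hB : ∃ K : ℝ≥0, ∀ u, B u ≤ K * E u) :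
    ∃ C : ℝ≥0, ∀ u, F u ≤ C * E u ^ 2 := by
  obtain ⟨K, hK⟩ := hA
  obtain ⟨L, hL⟩ := hB
  refine ⟨K * L, fun u => (hF u).trans ((mul_le_mul' (hK u) (hL u)).trans_eq ?_)⟩
  rw [ENNReal.coe_mul]; ring

include hg hgE in
lemma exists_mixedNorm_two_le (hn₂ : n₂ ≤ N) :
    ∃ K : ℝ≥0, ∀ u, mixedNorm volume volume 2 (g u) ≤ K * E u := by
  simpa only [mixedNorm_two_eq (hg _)] using hgE.exists_eLpNorm_le hn₂

include hΦ hg ha hgE hle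

lemma isQuadBounded_one_of_le_mul (hn₁ : n₁ ≤ N) (hn₂ : n₂ ≤ N) : IsQuadBounded E σ 1 Φ :=
  ⟨hΦ, exists_le_mul_sq
    (fun u => mixedNorm_one_le_of_le_mul (ha.measurable u) (hg u) (hle u))
    (ha.exists_eLpNorm_le hn₁) (exists_mixedNorm_two_le hg hgE hn₂)⟩

/- The factor with fewer derivatives is bounded uniformly in `x`: with at most three derivatives in
total, one of the factors carries at most one of them. -/
lemma isQuadBounded_two_of_le_mul (hN : 4 ≤ N) (hn : n₁ + n₂ ≤ 3) : IsQuadBounded E σ 2 Φ := by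
  refine ⟨hΦ, ?_⟩
  rcases le_or_gt n₁ 1 with h₁ | h₁
  · obtain ⟨K, hK⟩ := ha.exists_le (by omega)
    exact exists_le_mul_sq (A := fun u => K * E u)
      (fun u => mixedNorm_le_of_le_mul_of_le ENNReal.ofNat_ne_top (hg u) (hle u) (hK u))
      ⟨K, fun _ => le_rfl⟩ (exists_mixedNorm_two_le hg hgE (by omega))
  · obtain ⟨K, hK⟩ := hgE.exists_le (by omega)
    exact exists_le_mul_sq (A := fun u => K * E u)
      (fun u => mixedNorm_two_le_of_le_mul_of_slice_le (ha.measurable u)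
        (measurable_uncurry_jap_rpow_mul σ (hΦ u)) (hg u) (hle u) (hK u))
      ⟨K, fun _ => le_rfl⟩ (ha.exists_eLpNorm_le (by omega))

end Product

end QuadraticBound

/-! ### The terms of the source -/

section Source

variable {γ ℓ σ ρ : ℝ} {N B a₁ b₁ a₂ b₂ : ℕ} {A : PhaseSchwartz → E3 → E3 → ℝ}
  {P R : Module.End ℝ PhaseSchwartz}

lemma measurable_eLpNorm_uc (h : PhaseSchwartz) :
    Measurable fun x => eLpNorm (uc h x) 2 volume :=
  measurable_eLpNorm_left (f := fun ξ x => uc h x ξ)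
    ((measurable_uncurry_uc h).comp measurable_swap) ENNReal.ofNat_ne_top

lemma differentiable_uc (h : PhaseSchwartz) (ξ : E3) : Differentiable ℝ fun x => uc h x ξ :=
  h.differentiable.comp (differentiable_id.prodMk (differentiable_const ξ))

lemma isSobolevControlled_japMul (hP : IsMixedDeriv a₁ b₁ P) {τ : ℝ}
    (hτ : τ ≤ (γ + 2) * (b₁ - ℓ)) :
    IsSobolevControlled (energyNorm γ N ℓ) N (a₁ + b₁)
      fun u x => eLpNorm (uc (japMul τ (P u)) x) 2 volume where
  measurable _ := measurable_eLpNorm_uc _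
  exists_eLpNorm_le hn := ⟨1, fun u => by
    rw [← mixedNorm_two_eq (measurable_uncurry_uc _), ENNReal.coe_one, one_mul]
    exact mixedNorm_two_japMul_le_energyNorm hP hn hτ u⟩
  exists_le hn := ⟨3, eLpNorm_two_japMul_le_energyNorm hP hn hτ⟩

lemma isSobolevControlled_eLpNorm_uc (hP : IsMixedDeriv a₁ b₁ P)
    (hb : 0 ≤ (γ + 2) * (b₁ - ℓ)) :
    IsSobolevControlled (energyNorm γ N ℓ) N (a₁ + b₁)
      fun u x => eLpNorm (uc (P u) x) 2 volume := by
  have hone (h : PhaseSchwartz) : japMul 0 h = h := by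
    ext z; rw [japMul_apply, rpow_zero, one_mul]
  simpa only [hone] using isSobolevControlled_japMul hP hb

lemma isSobolevControlled_potential (hP : IsMixedDeriv a₁ 0 P) (i : Fin 3) :
    IsSobolevControlled (energyNorm γ N ℓ) N a₁
      fun u x => ‖potential (fieldSource i (P u)) x‖ₑ where
  measurable _ := (contDiff_potential _ 0).continuous.measurable.enorm
  exists_eLpNorm_le hn := ⟨1, fun u => by
    rw [eLpNorm_enorm, ENNReal.coe_one, one_mul]
    exact eLpNorm_two_potential_le_energyNorm hP hn i u⟩
  exists_le hn := ⟨3, enorm_potential_le_energyNorm hP hn i⟩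

/-- The nonlocal factors of the source: linear expressions `A h` commuting with the space
derivatives, such that `⟨ξ⟩^ρ A h` is bounded uniformly in `ξ` by a function of the position
controlled by the energy, when `h` is a derivative of `u` of order at most `B` in the velocity. -/
structure IsNonlocalFactor (γ : ℝ) (N : ℕ) (ℓ ρ : ℝ) (B : ℕ)
    (A : PhaseSchwartz → E3 → E3 → ℝ) : Prop where
  measurable : ∀ h, Measurable (Function.uncurry (A h))
  differentiable : ∀ h ξ, Differentiable ℝ fun x => A h x ξ
  pdx_eq : ∀ k h, pdx k (A h) = A (spaceDeriv k h)
  exists_enorm_le : ∀ {a b : ℕ} {P : Module.End ℝ PhaseSchwartz}, IsMixedDeriv a b P → b ≤ B →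
    ∃ f, IsSobolevControlled (energyNorm γ N ℓ) N (a + b) f ∧
      ∀ u x ξ, ‖jap ξ ^ ρ * A (P u) x ξ‖ₑ ≤ f u x

namespace IsNonlocalFactor

lemma exists_enorm_mul_le (hA : IsNonlocalFactor γ N ℓ ρ B A) (hP : IsMixedDeriv a₁ b₁ P)
    (hb : b₁ ≤ B) (σ : ℝ) (R : Module.End ℝ PhaseSchwartz) :
    ∃ f, IsSobolevControlled (energyNorm γ N ℓ) N (a₁ + b₁) f ∧ ∀ u x ξ,
      ‖jap ξ ^ σ * (A (P u) x ξ * R u (x, ξ))‖ₑ ≤ f u x * ‖uc (japMul (σ - ρ) (R u)) x ξ‖ₑ := by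
  obtain ⟨f, hf, hle⟩ := hA.exists_enorm_le hP hb
  refine ⟨f, hf, fun u x ξ => ?_⟩
  have hsplit : jap ξ ^ σ * (A (P u) x ξ * R u (x, ξ))
      = jap ξ ^ ρ * A (P u) x ξ * uc (japMul (σ - ρ) (R u)) x ξ := by
    rw [uc, japMul_apply, mul_mul_mul_comm, ← rpow_add (jap_pos ξ), add_sub_cancel]
  rw [hsplit, enorm_mul]
  gcongr
  exact hle u x ξ

section Mul

variable (hA : IsNonlocalFactor γ N ℓ ρ B A) (hP : IsMixedDeriv a₁ b₁ P)
  (hR : IsMixedDeriv a₂ b₂ R) (hN : 4 ≤ N) (hb : b₁ ≤ B) (hτ : σ - ρ ≤ (γ + 2) * (b₂ - ℓ))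
include hA hP hR hN hb hτ

lemma isQuadBounded_mul_one (hn : a₁ + b₁ + (a₂ + b₂) ≤ 3) :
    IsQuadBounded (energyNorm γ N ℓ) σ 1 fun u x ξ => A (P u) x ξ * R u (x, ξ) := by
  obtain ⟨f, hf, hle⟩ := hA.exists_enorm_mul_le hP hb σ R
  exact isQuadBounded_one_of_le_mul
    (fun u => (hA.measurable _).mul (measurable_uncurry_uc (R u)))
    (fun _ => measurable_uncurry_uc _)
    hf (isSobolevControlled_japMul hR hτ) hle (by omega) (by omega)

lemma isQuadBounded_mul_two (hn : a₁ + b₁ + (a₂ + b₂) ≤ 3) :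
    IsQuadBounded (energyNorm γ N ℓ) σ 2 fun u x ξ => A (P u) x ξ * R u (x, ξ) := by
  obtain ⟨f, hf, hle⟩ := hA.exists_enorm_mul_le hP hb σ R
  exact isQuadBounded_two_of_le_mul
    (fun u => (hA.measurable _).mul (measurable_uncurry_uc (R u)))
    (fun _ => measurable_uncurry_uc _)
    hf (isSobolevControlled_japMul hR hτ) hle hN hn

lemma isQuadSource_mul (hn : a₁ + b₁ + (a₂ + b₂) ≤ 2) :
    IsQuadSource (energyNorm γ N ℓ) σ fun u x ξ => A (P u) x ξ * R u (x, ξ) where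
  differentiable u ξ := (hA.differentiable _ ξ).fun_mul (differentiable_uc (R u) ξ)
  one := hA.isQuadBounded_mul_one hP hR hN hb hτ (by omega)
  two := hA.isQuadBounded_mul_two hP hR hN hb hτ (by omega)
  two_pdx k := by
    have hpdx (u : PhaseSchwartz) : pdx k (fun x ξ => A (P u) x ξ * R u (x, ξ))
        = fun x ξ => A ((spaceDeriv k * P) u) x ξ * R u (x, ξ)
          + A (P u) x ξ * (spaceDeriv k * R) u (x, ξ) := by
      refine (pdx_mul (hA.differentiable (P u)) (differentiable_uc (R u)) k).trans ?_
      rw [hA.pdx_eq, pdx_uc]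
      rfl
    simp only [hpdx]
    exact (hA.isQuadBounded_mul_two ((IsMixedDeriv.of_spaceDeriv k).mul hP) hR hN (by omega) hτ
      (by omega)).add one_le_two ENNReal.ofNat_ne_top
      (hA.isQuadBounded_mul_two hP ((IsMixedDeriv.of_spaceDeriv k).mul hR) hN hb (by simpa using hτ)
        (by omega))

end Mul

end IsNonlocalFactor

lemma isNonlocalFactor_landauConv (hγ : -7 / 2 < γ) (hγ' : γ ≤ -2) (hℓ : B ≤ ℓ) (i j : Fin 3)
    {g : E3 → ℝ} (hg : IsRapidMultiplier g) :
    IsNonlocalFactor γ N ℓ (-(γ + 2)) B fun h x ξ => landauConv γ i j (velMul g h) (x, ξ) where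
  measurable h := (differentiable_landauConv (by linarith) hγ' i j _).continuous.measurable
  differentiable h ξ := (differentiable_landauConv (by linarith) hγ' i j _).comp
    (differentiable_id.prodMk (differentiable_const ξ))
  pdx_eq k h := by
    funext x ξ
    rw [pdx_curry (differentiable_landauConv (by linarith) hγ' i j _ _),
      fderiv_landauConv_apply (by linarith) hγ', ← spaceDeriv_velMul hg.hasTemperateGrowth]
    rfl
  exists_enorm_le {a b P} hP hb := by
    obtain ⟨C, hC⟩ := exists_enorm_landauConv_velMul_le hγ hγ' i j hg
    have hbℓ : (b : ℝ) ≤ ℓ := le_trans (by exact_mod_cast hb) hℓ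
    exact ⟨_, (isSobolevControlled_eLpNorm_uc hP
      (mul_nonneg_of_nonpos_of_nonpos (by linarith) (by linarith))).const_mul C, fun u => hC (P u)⟩

lemma isNonlocalFactor_potential (i : Fin 3) {m : E3 → ℝ} (hm : Measurable m) {e : ℝ}
    (hme : ∀ ξ, |m ξ| ≤ jap ξ ^ e) :
    IsNonlocalFactor γ N ℓ (-e) 0 fun h x ξ => m ξ * potential (fieldSource i h) x where
  measurable h := (hm.comp measurable_snd).mul
    ((contDiff_potential _ 0).continuous.measurable.comp measurable_fst)
  differentiable h ξ := ((contDiff_potential _ 1).differentiable one_ne_zero).const_mul _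
  pdx_eq k h := by
    have hcomm : fieldSource i (spaceDeriv k h) = spaceDeriv k (fieldSource i h) :=
      LinearMap.congr_fun (commute_fieldSource_spaceDeriv i k).eq h
    funext x ξ
    rw [hcomm, ← pd_potential, pdx,
      fderiv_const_mul (hasFDerivAt_potential _ _).differentiableAt]
    rfl
  exists_enorm_le {a b P} hP hb := by
    obtain rfl := Nat.le_zero.1 hb
    refine ⟨_, isSobolevControlled_potential hP i, fun u x ξ => ?_⟩
    have hone : |jap ξ ^ (-e) * m ξ| ≤ 1 := by
      rw [abs_mul, abs_of_pos (rpow_pos_of_pos (jap_pos ξ) _), rpow_neg (jap_pos ξ).le,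
        inv_mul_le_one₀ (rpow_pos_of_pos (jap_pos ξ) _)]
      exact hme ξ
    rw [← mul_assoc, enorm_mul]
    refine mul_le_of_le_one_left' ?_
    rw [enorm_eq_ofReal_abs]
    exact ENNReal.ofReal_le_one.2 hone

/-- The exponents of the estimate: `γ` is a very soft potential, the energy controls four
derivatives, and its weight `⟨ξ⟩^{-(γ+2)ℓ}` beats `⟨ξ⟩^σ` by one power of `ξ`. -/
structure IsAdmissible (γ : ℝ) (N : ℕ) (ℓ σ : ℝ) : Prop where
  neg_three_le : -3 ≤ γ
  lt_neg_two : γ < -2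
  four_le : 4 ≤ N
  two_le : 2 ≤ ℓ
  add_one_le : σ + 1 ≤ -(γ + 2) * ℓ

namespace IsAdmissible

lemma isQuadSource_collision (h : IsAdmissible γ N ℓ σ) (i j : Fin 3) {g : E3 → ℝ}
    (hg : IsRapidMultiplier g) (hP : IsMixedDeriv a₁ b₁ P) (hR : IsMixedDeriv a₂ b₂ R)
    (hn : a₁ + b₁ + (a₂ + b₂) ≤ 2) :
    IsQuadSource (energyNorm γ N ℓ) σ fun u x ξ =>
      landauConv γ i j (velMul g (P u)) (x, ξ) * R u (x, ξ) := by
  obtain ⟨hγ, hγ', hN, hℓ, hσ⟩ := h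
  have hb₂ : (b₂ : ℝ) ≤ 2 := by exact_mod_cast (by omega : b₂ ≤ 2)
  exact (isNonlocalFactor_landauConv (B := 2) (by linarith) hγ'.le hℓ i j hg).isQuadSource_mul
    hP hR hN (by omega) (by nlinarith) hn

lemma isQuadSource_Gam (h : IsAdmissible γ N ℓ σ) :
    IsQuadSource (energyNorm γ N ℓ) σ fun u x => Gam γ (uc u x) (uc u x) := by
  have hγ : -5 < γ := by linarith [h.neg_three_le]
  have hM := isRapidMultiplier_sqrtM
  have hv (i : Fin 3) := IsMixedDeriv.of_velDeriv i
  have hvv (i j : Fin 3) := (hv i).mul (hv j)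
  have h₁ := IsMixedDeriv.one
  rw [show (fun u x => Gam γ (uc u x) (uc u x)) = _ from
    funext₃ (Gam_uc hγ h.lt_neg_two.le)]
  refine .sum_fin_three fun i => .sum_fin_three fun j => ?_
  exact (((h.isQuadSource_collision i j hM h₁ (hvv i j) le_rfl).sub
    (h.isQuadSource_collision i j hM (hvv i j) h₁ le_rfl)).sub
    (h.isQuadSource_collision i j (hM.coord_mul i) h₁ (hv j) (by omega))).add
    (h.isQuadSource_collision i j (hM.coord_mul i) (hv j) h₁ (by omega))

lemma isQuadSource_Gfun (h : IsAdmissible γ N ℓ σ) :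
    IsQuadSource (energyNorm γ N ℓ) σ fun u => Gfun γ (uc u) := by
  have hstretch (i : Fin 3) : IsQuadSource (energyNorm γ N ℓ) σ fun u x ξ =>
      ξ i * potential (fieldSource i u) x * u (x, ξ) := by
    have hcoord (ξ : E3) : |ξ i| ≤ jap ξ ^ (1 : ℝ) := by
      rw [rpow_one]
      exact (PiLp.norm_apply_le ξ i).trans (norm_le_jap ξ)
    have hA : IsNonlocalFactor γ N ℓ (-1) 0 fun h x ξ => ξ i * potential (fieldSource i h) x :=
      isNonlocalFactor_potential i (hasTemperateGrowth_coord i).1.continuous.measurable hcoord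
    exact hA.isQuadSource_mul (P := 1) (R := 1) .one .one h.four_le le_rfl
      (by push_cast; linarith [h.add_one_le]) (by omega)
  have hforce (i : Fin 3) : IsQuadSource (energyNorm γ N ℓ) σ fun u x ξ =>
      1 * potential (fieldSource i u) x * velDeriv i u (x, ξ) := by
    have hA : IsNonlocalFactor γ N ℓ (-0) 0 fun h x _ => 1 * potential (fieldSource i h) x :=
      isNonlocalFactor_potential i measurable_const fun ξ => by simp
    exact hA.isQuadSource_mul (P := 1) .one (.of_velDeriv i) h.four_le le_rfl
      (by push_cast; linarith [h.add_one_le, h.neg_three_le]) (by omega)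
  have hG (u : PhaseSchwartz) : Gfun γ (uc u) = fun x ξ =>
      1 / 2 * (∑ i, ξ i * potential (fieldSource i u) x * u (x, ξ))
        - (∑ i, 1 * potential (fieldSource i u) x * velDeriv i u (x, ξ))
        + Gam γ (uc u x) (uc u x) ξ := by
    funext x ξ
    simp only [Gfun, pd_phiF_uc, pd_uc, uc, one_mul, mul_assoc, Finset.sum_mul]
  simp only [hG]
  exact (((IsQuadSource.sum_fin_three hstretch).const_mul _).sub (.sum_fin_three hforce)).add
    h.isQuadSource_Gam

end IsAdmissible

variable {Φ : PhaseSchwartz → E3 → E3 → ℝ}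

lemma IsQuadBounded.exists_le_triSq {p : ℝ≥0∞} (hΦ : IsQuadBounded (energyNorm γ N ℓ) σ p Φ)
    {F : PhaseSchwartz → ℝ}
    (hF : ∀ u, ENNReal.ofReal (F u)
      ≤ mixedNorm volume volume p fun x ξ => jap ξ ^ σ * Φ u x ξ) :
    ∃ C, 0 ≤ C ∧ ∀ u, F u ≤ C * triSq γ N ℓ 0 1 0 (uc u) := by
  obtain ⟨C, hC⟩ := hΦ.exists_le
  refine ⟨C, C.coe_nonneg, fun u => ?_⟩
  rw [← ENNReal.ofReal_le_ofReal_iff (mul_nonneg C.coe_nonneg (triSq_nonneg _)),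
    ENNReal.ofReal_mul C.coe_nonneg, ← energyNorm_sq, ENNReal.ofReal_coe_nnreal]
  exact (hF u).trans (hC u)

end Source

theorem nonlinear_source_estimate_general (γ : ℝ) (hγ1 : -3 ≤ γ) (hγ2 : γ < -2)
    (N : ℕ) (hN : 4 ≤ N) (ℓ₀ ℓ : ℝ) (hℓ : max 2 (ℓ₀ / 2 - 1 / (γ + 2)) ≤ ℓ - 1) :
    ∃ C > (0 : ℝ), ∀ u : SchwartzMap (E3 × E3) ℝ,
      Z1 (fun x ξ => jap ξ ^ (-(γ + 2) * ℓ₀ / 2) * Gfun γ (uc u) x ξ)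
          + (∑ α ∈ midx 1, Real.sqrt (∫ x, ∫ ξ,
              (jap ξ ^ (-(γ + 2) * ℓ₀ / 2) * pdxM α (Gfun γ (uc u)) x ξ) ^ 2))
        ≤ C * triSq γ N (ℓ - 1) 0 1 0 (uc u) := by
  set σ := -(γ + 2) * ℓ₀ / 2 with hσ
  obtain ⟨hℓ2, hℓ⟩ := max_le_iff.1 hℓ
  have hadm : IsAdmissible γ N (ℓ - 1) σ := by
    refine ⟨hγ1, hγ2, hN, hℓ2, ?_⟩
    have hscale := mul_le_mul_of_nonneg_left hℓ (by linarith : 0 ≤ -(γ + 2))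
    have hcancel : (γ + 2) * (1 / (γ + 2)) = 1 := mul_one_div_cancel (by linarith)
    linarith
  have hG := hadm.isQuadSource_Gfun
  obtain ⟨C₁, hC₁, hZ⟩ := hG.one.exists_le_triSq fun u => ofReal_Z1_le_mixedNorm _
  have hD (α : midx 1) := (hG.pdxM α.2).exists_le_triSq fun u =>
    ofReal_sqrt_integral_integral_sq_le_mixedNorm
      (measurable_uncurry_jap_rpow_mul σ ((hG.pdxM α.2).measurable u))
  choose C hC hL using hD
  refine ⟨C₁ + ∑ α, C α + 1, add_pos_of_nonneg_of_pos
    (add_nonneg hC₁ (Finset.sum_nonneg fun α _ => hC α)) one_pos, fun u => ?_⟩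
  rw [← Finset.sum_coe_sort (midx 1)]
  have hT : 0 ≤ triSq γ N (ℓ - 1) 0 1 0 (uc u) := triSq_nonneg _
  calc _ ≤ C₁ * triSq γ N (ℓ - 1) 0 1 0 (uc u) + ∑ α, C α * triSq γ N (ℓ - 1) 0 1 0 (uc u) :=
        add_le_add (hZ u) (Finset.sum_le_sum fun α _ => hL α u)
    _ ≤ _ := by rw [← Finset.sum_mul]; linarith

theorem nonlinear_source_estimate (γ : ℝ) (hγ1 : -3 ≤ γ) (hγ2 : γ < -2)
    (N : ℕ) (hN : 4 ≤ N) (ℓ₀ ℓ : ℝ) (hℓ₀ : 3 / 2 < ℓ₀)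
    (hℓ : max (N : ℝ) (ℓ₀ / 2 - 1 / (γ + 2)) ≤ ℓ - 1) :
    ∃ C > (0 : ℝ), ∀ u : SchwartzMap (E3 × E3) ℝ,
      Z1 (fun x ξ => jap ξ ^ (-(γ + 2) * ℓ₀ / 2) * Gfun γ (uc u) x ξ)
          + (∑ α ∈ midx 1, Real.sqrt (∫ x, ∫ ξ,
              (jap ξ ^ (-(γ + 2) * ℓ₀ / 2) * pdxM α (Gfun γ (uc u)) x ξ) ^ 2))
        ≤ C * triSq γ N (ℓ - 1) 0 1 0 (uc u) :=
  nonlinear_source_estimate_general γ hγ1 hγ2 N hN ℓ₀ ℓ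
    ((max_le_max_right _ (by exact_mod_cast (by omega : 2 ≤ N))).trans hℓ)

end
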